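/- arXiv:2509.06874 — 7 statements merged into one kernel-verified Lean document; each statement's English description precedes it below -/
import Mathlib

section
/- Let Γ = {m + n·i : m, n ∈ ℤ} ⊂ ℂ be the lattice of Gaussian integers. Let n be a natural number, let P ∈ ℂ[ξ] be a polynomial of degree n with P(0) = 0 and P′(0) = 1, let p ∈ ℂ \ Γ, and let Q ∈ ℂ[ξ] be a polynomial with Q(0) ≠ 0. Then there exists an entire function h : ℂ → ℂ such that: (i) the zero set of h is exactly Γ (i.e. h(ξ) = 0 if and only if ξ ∈ Γ); (ii) for every q ∈ Γ and every natural number j ≤ n, the j-th iterated derivative of h at q equals j!·(coefficient of ξ^j in P), i.e. the first n+1 terms of the Taylor expansion of h at q coincide with P(ξ − q); and (iii) for every natural number j ≤ deg Q, the j-th iterated derivative of h at p equals j!·(coefficient of ξ^j in Q), i.e. the Taylor expansion of h at p coincides with Q up to order deg Q. -/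
/-!
The function is `h = σ * exp g`, where `σ` is entire with simple zeros exactly on the lattice `Γ`
and `g` is an entire function with prescribed jets on `S = Γ ∪ {p}`.

* `exists_sigma` builds `σ` as a theta product. With `r = exp (-2π)`, the entire function
  `Φ w = ∏ (1 - r ^ k * w)` satisfies `Φ w = (1 - w) * Φ (r * w)`, so that its zeros are the points
  `r ^ (-k)`, all simple (`exists_pochhammer`). Then
  `σ z = Φ (exp (2πiz)) * Φ (r * exp (-2πiz))`: the first factor vanishes at the lattice points
  with imaginary part `≤ 0`, the second at those with imaginary part `> 0`.

* Near `q ∈ Γ` the quotient `P (z - q) / σ z` is holomorphic without zeros, because numerator and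
  denominator both vanish to order exactly one; near `p` the same is true of `Q (z - p) / σ z`.
  Each quotient has a local logarithm `L`, and if `g` agrees with `L` to order `N`, then
  `σ * exp g` agrees with the prescribed polynomial to order `N`.

* `exists_interpolation` gives an entire `g` with prescribed `N`-jets on `S`. It is a sum
  `∑ c_a` over `a ∈ S`, where `c_a` has the right jet at `a`, vanishes to order `N` at the other
  points of `S`, and is tiny for `‖z‖ ≤ ‖a‖ / 2` (`exists_block`). Smallness comes from a factor
  `1 - (1 - (z / a) ^ M) ^ N`: it is `1` to order `N` at `a`, whatever `M` is, and tends to `0`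
  uniformly on that disc as `M → ∞`.
-/

/-- The lattice of Gaussian integers in ℂ. -/
def gaussianLattice : Set ℂ := {z | ∃ m n : ℤ, z = (m : ℂ) + (n : ℂ) * Complex.I}

open Filter Topology

/-! ### Jets of holomorphic functions -/

/-- `f` and `g` have the same Taylor expansion at `a` up to terms of order `N`, in the form
that `f - g` is `(z - a) ^ N` times a function holomorphic near `a`. -/
def JetEq (N : ℕ) (a : ℂ) (f g : ℂ → ℂ) : Prop :=
  ∃ F : ℂ → ℂ, AnalyticAt ℂ F a ∧ ∀ᶠ z in 𝓝 a, f z = g z + (z - a) ^ N * F z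

namespace JetEq

variable {N : ℕ} {a : ℂ} {f g k f' g' : ℂ → ℂ}

lemma of_eventuallyEq (h : f =ᶠ[𝓝 a] g) : JetEq N a f g :=
  ⟨fun _ => 0, analyticAt_const, h.mono fun z hz => by simp [hz]⟩

lemma trans (h : JetEq N a f g) (h' : JetEq N a g k) : JetEq N a f k := by
  obtain ⟨F, hF, e⟩ := h
  obtain ⟨G, hG, e'⟩ := h'
  exact ⟨fun z => F z + G z, hF.add hG, by
    filter_upwards [e, e'] with z h1 h2
    rw [h1, h2]; ring⟩

lemma add (h : JetEq N a f g) (h' : JetEq N a f' g') :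
    JetEq N a (fun z => f z + f' z) (fun z => g z + g' z) := by
  obtain ⟨F, hF, e⟩ := h
  obtain ⟨G, hG, e'⟩ := h'
  exact ⟨fun z => F z + G z, hF.add hG, by
    filter_upwards [e, e'] with z h1 h2
    rw [h1, h2]; ring⟩

lemma mul_left (hk : AnalyticAt ℂ k a) (h : JetEq N a f g) :
    JetEq N a (fun z => k z * f z) (fun z => k z * g z) := by
  obtain ⟨F, hF, e⟩ := h
  exact ⟨fun z => k z * F z, hk.mul hF, by
    filter_upwards [e] with z h1
    rw [h1]; ring⟩

lemma finset_sum_zero {ι : Type*} {c : ι → ℂ → ℂ} (s : Finset ι)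
    (h : ∀ i ∈ s, JetEq N a (c i) (fun _ => 0)) :
    JetEq N a (fun z => ∑ i ∈ s, c i z) (fun _ => 0) := by
  classical
  induction s using Finset.induction_on with
  | empty => exact of_eventuallyEq (by simp)
  | insert i s hi ih =>
    simp only [Finset.sum_insert hi]
    simpa using (h i (by simp)).add (ih fun j hj => h j (by simp [hj]))

lemma dslope_analyticAt (hf : AnalyticAt ℂ f a) : AnalyticAt ℂ (dslope f a) a :=
  let ⟨_, hp⟩ := hf
  ⟨_, hp.has_fpower_series_dslope_fslope⟩

lemma eq_dslope (f : ℂ → ℂ) (a z : ℂ) : f z = f a + (z - a) * dslope f a z := by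
  have := sub_smul_dslope f a z
  rw [smul_eq_mul] at this
  rw [this]; ring

lemma pow_zero_of_zero (hf : AnalyticAt ℂ f a) (h0 : f a = 0) :
    JetEq N a (fun z => f z ^ N) (fun _ => 0) :=
  ⟨fun z => dslope f a z ^ N, (dslope_analyticAt hf).pow N, .of_forall fun z => by
    dsimp only
    rw [eq_dslope f a z, h0, zero_add, zero_add, mul_pow]⟩

protected lemma cexp (hf : AnalyticAt ℂ f a) (hg : AnalyticAt ℂ g a) (h : JetEq N a f g)
    (hN : 0 < N) :
    JetEq N a (fun z => Complex.exp (f z)) (fun z => Complex.exp (g z)) := by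
  obtain ⟨F, hF, e⟩ := h
  have hD : AnalyticAt ℂ (dslope Complex.exp 0) (f a - g a) := by
    have : f a - g a = 0 := by
      rw [e.self_of_nhds]; simp [hN.ne']
    rw [this]
    exact dslope_analyticAt (Complex.differentiable_exp.analyticAt 0)
  refine ⟨fun z => Complex.exp (g z) * (F z * dslope Complex.exp 0 (f z - g z)),
    hg.cexp.mul (hF.mul (hD.fun_comp_of_eq (hf.fun_sub hg) rfl)), ?_⟩
  filter_upwards [e] with z hz
  have h1 := eq_dslope Complex.exp 0 (f z - g z)
  rw [Complex.exp_sub, Complex.exp_zero] at h1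
  have h2 : f z - g z = (z - a) ^ N * F z := by rw [hz]; ring
  have h3 : Complex.exp (g z) ≠ 0 := Complex.exp_ne_zero _
  rw [div_eq_iff h3] at h1
  rw [h1, sub_zero]
  nth_rw 1 [h2]
  ring

/-- For holomorphic germs, `JetEq` means equality of the derivatives of order `< N`. -/
lemma iff_iteratedDeriv (hf : AnalyticAt ℂ f a) (hg : AnalyticAt ℂ g a) :
    JetEq N a f g ↔ ∀ j < N, iteratedDeriv j f a = iteratedDeriv j g a := by
  have h1 := natCast_le_analyticOrderAt_iff_iteratedDeriv_eq_zero (n := N) (hf.sub hg)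
  rw [natCast_le_analyticOrderAt (hf.sub hg)] at h1
  have h2 : ∀ j, iteratedDeriv j (f - g) a = iteratedDeriv j f a - iteratedDeriv j g a :=
    fun j => iteratedDeriv_sub hf.contDiffAt hg.contDiffAt
  simp only [h2, sub_eq_zero] at h1
  rw [← h1]
  refine exists_congr fun F => and_congr_right fun _ => eventually_congr (.of_forall fun z => ?_)
  simp [sub_eq_iff_eq_add']

/-- Every germ has the `N`-jet of an entire function (its Taylor polynomial). -/
lemma exists_entire (N : ℕ) (hf : AnalyticAt ℂ f a) :
    ∃ A : ℂ → ℂ, Differentiable ℂ A ∧ JetEq N a A f := by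
  induction N generalizing f with
  | zero => exact ⟨fun _ => 0, by fun_prop, fun z => -f z, hf.neg, by simp⟩
  | succ N ih =>
    obtain ⟨A, hA, F, hF, e⟩ := ih (dslope_analyticAt hf)
    refine ⟨fun z => f a + (z - a) * A z, by fun_prop, F, hF, ?_⟩
    filter_upwards [e] with z hz
    rw [hz, eq_dslope f a z]
    ring

end JetEq

open JetEq

/-! ### Interpolation of jets by entire functions -/

lemma differentiable_dslope {τ : ℂ → ℂ} (hτ : Differentiable ℂ τ) (a : ℂ) :
    Differentiable ℂ (dslope τ a) := by
  rw [← differentiableOn_univ] at *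
  exact (Complex.differentiableOn_dslope univ_mem).2 hτ

/-- The summand attached to one node `a` of the interpolation series: the jet of `L` at `a`,
the zero jet at the other nodes, and, when `a ≠ 0`, norm at most `ε` on the disc of radius
`‖a‖ / 2`. -/
lemma exists_block {S : Set ℂ} {τ : ℂ → ℂ} (hτ : Differentiable ℂ τ)
    (h0 : ∀ b ∈ S, τ b = 0) (N : ℕ) {a : ℂ} (haS : a ∈ S) (h1 : deriv τ a ≠ 0)
    {L : ℂ → ℂ} (hL : AnalyticAt ℂ L a) {ε : ℝ} (hε : 0 < ε) :
    ∃ c : ℂ → ℂ, Differentiable ℂ c ∧ JetEq N a c L ∧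
      (∀ b ∈ S, b ≠ a → JetEq N b c (fun _ => 0)) ∧
      (a ≠ 0 → ∀ z, ‖z‖ ≤ ‖a‖ / 2 → ‖c z‖ ≤ ε) := by
  -- `v ^ N` vanishes to order `N` at every node except `a`, where it is a unit.
  set v := dslope τ a with hv
  have hvd : Differentiable ℂ v := differentiable_dslope hτ a
  have hva : v a ≠ 0 := by simpa [hv, dslope_same] using h1
  have hvz : ∀ b ∈ S, b ≠ a → v b = 0 := fun b hb hba => by
    rw [hv, dslope_of_ne _ hba, slope_def_field, h0 b hb, h0 a haS]; simp
  obtain ⟨A, hA, hAj⟩ := exists_entire N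
    (hL.div ((hvd.analyticAt a).pow N) (pow_ne_zero _ hva))
  set B : ℂ → ℂ := fun z => v z ^ N * A z with hB
  have hBd : Differentiable ℂ B := (hvd.pow N).mul hA
  have hBa : JetEq N a B L := by
    refine (mul_left ((hvd.analyticAt a).pow N) hAj).trans (of_eventuallyEq ?_)
    filter_upwards [hvd.continuous.continuousAt.eventually_ne hva] with z hz
    simp only [Pi.pow_apply, Pi.div_apply]
    field_simp
  have hBb : ∀ b ∈ S, b ≠ a → JetEq N b B (fun _ => 0) := fun b hb hba => by
    have := mul_left (hA.analyticAt b)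
      (pow_zero_of_zero (N := N) (hvd.analyticAt b) (hvz b hb hba))
    simpa [hB, mul_comm] using this
  by_cases ha : a = 0
  · exact ⟨B, hBd, hBa, hBb, fun h => absurd ha h⟩
  obtain ⟨C, hC⟩ := (isCompact_closedBall (0 : ℂ) (‖a‖ / 2)).exists_bound_of_continuousOn
    hBd.continuous.continuousOn
  have hC0 : 0 ≤ C := (norm_nonneg _).trans (hC 0 (by simp; positivity))
  have hlim : Tendsto (fun w : ℂ => 1 - (1 - w) ^ N) (𝓝 0) (𝓝 0) := by
    have : Continuous fun w : ℂ => 1 - (1 - w) ^ N := by fun_prop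
    simpa using this.tendsto 0
  obtain ⟨δ, hδ, hδ'⟩ := Metric.tendsto_nhds_nhds.1 hlim (ε / (C + 1)) (by positivity)
  obtain ⟨M, hM⟩ := exists_pow_lt_of_lt_one hδ (by norm_num : (1 / 2 : ℝ) < 1)
  set u : ℂ → ℂ := fun z => 1 - (1 - (z / a) ^ M) ^ N with hu
  have hud : Differentiable ℂ u := by fun_prop
  refine ⟨fun z => B z * u z, hBd.mul hud, ?_, fun b hb hba => ?_, fun _ z hz => ?_⟩
  · have hu1 : JetEq N a u (fun _ => 1) := by
      obtain ⟨F, hF, e⟩ := pow_zero_of_zero (N := N) (f := fun z => 1 - (z / a) ^ M) (a := a)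
        (Differentiable.analyticAt (by fun_prop) a) (by simp [div_self ha])
      exact ⟨fun z => -F z, hF.neg, e.mono fun z hz => by
        simp only [hu] at hz ⊢; rw [hz]; ring⟩
    have := mul_left (hBd.analyticAt a) hu1
    simp only [mul_one] at this
    exact this.trans hBa
  · have := mul_left (hud.analyticAt b) (hBb b hb hba)
    simpa [mul_comm] using this
  · have h2 : ‖u z‖ < ε / (C + 1) := by
      have : dist ((z / a) ^ M) 0 < δ := by
        rw [dist_zero_right, norm_pow, norm_div]
        refine lt_of_le_of_lt (pow_le_pow_left₀ (by positivity) ?_ M) hM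
        rw [div_le_iff₀ (norm_pos_iff.2 ha)]
        linarith
      simpa using hδ' this
    rw [norm_mul]
    calc ‖B z‖ * ‖u z‖ ≤ (C + 1) * (ε / (C + 1)) := by
          gcongr
          linarith [hC z (by simpa using hz)]
      _ = ε := by field_simp

/-- Locally uniform convergence of entire functions passes to all derivatives. -/
lemma iteratedDeriv_tendsto {ι : Type*} {l : Filter ι} {F : ι → ℂ → ℂ} {f : ℂ → ℂ}
    (hF : ∀ i, Differentiable ℂ (F i)) (h : TendstoLocallyUniformlyOn F f l Set.univ) (j : ℕ) :
    TendstoLocallyUniformlyOn (fun i => iteratedDeriv j (F i)) (iteratedDeriv j f) l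
      Set.univ := by
  induction j with
  | zero => simpa using h
  | succ j ih =>
    simp only [iteratedDeriv_succ]
    refine ih.deriv (.of_forall fun i => ?_) isOpen_univ
    exact (ContDiff.differentiable_iteratedDeriv j (hF i).contDiff (n := (j + 1 : ℕ))
      (by exact_mod_cast j.lt_succ_self)).differentiableOn

/-- Entire functions realise arbitrary `N`-jets on a locally finite set `S`, given an entire `τ`
with simple zeros on `S` (and possibly further zeros elsewhere). -/
theorem exists_interpolation {S : Set ℂ} (hS : S.Countable)
    (hfin : ∀ R : ℝ, (S ∩ Metric.closedBall 0 R).Finite) {τ : ℂ → ℂ}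
    (hτ : Differentiable ℂ τ) (h0 : ∀ a ∈ S, τ a = 0) (h1 : ∀ a ∈ S, deriv τ a ≠ 0)
    (N : ℕ) (L : ℂ → ℂ → ℂ) (hL : ∀ a ∈ S, AnalyticAt ℂ (L a) a) :
    ∃ g : ℂ → ℂ, Differentiable ℂ g ∧ ∀ a ∈ S, JetEq N a g (L a) := by
  classical
  have := hS.to_subtype
  have := Encodable.ofCountable S
  obtain ⟨ε, hε, _, hεs, -⟩ := posSumOfEncodable one_pos S
  have hex := fun a : S => exists_block hτ h0 N a.2 (h1 a a.2) (hL a a.2) (hε a)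
  choose c hcd hca hcb hcε using hex
  have hconv : TendstoLocallyUniformlyOn (fun (t : Finset S) z => ∑ a ∈ t, c a z)
      (fun z => ∑' a, c a z) atTop Set.univ := by
    rw [tendstoLocallyUniformlyOn_iff_forall_isCompact isOpen_univ]
    intro K _ hK
    obtain ⟨R, hR⟩ := hK.isBounded.subset_closedBall 0
    refine tendstoUniformlyOn_tsum_of_cofinite_eventually hεs.summable ?_
    -- The bound of `exists_block` covers `K` as soon as `‖a‖ > 2 * R` and `a ≠ 0`.
    have hf : {a : S | (a : ℂ) ∈ Metric.closedBall 0 (max 0 (2 * R))}.Finite := by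
      refine ((hfin (max 0 (2 * R))).preimage Subtype.val_injective.injOn).subset fun a ha => ?_
      exact ⟨a.2, ha⟩
    filter_upwards [hf.compl_mem_cofinite] with a ha z hz
    have ha' : max 0 (2 * R) < ‖(a : ℂ)‖ := by simpa using ha
    rw [max_lt_iff] at ha'
    refine hcε a (norm_pos_iff.1 ha'.1) z ?_
    have := hR hz
    rw [mem_closedBall_zero_iff] at this
    linarith
  have hpd : ∀ t : Finset S, Differentiable ℂ (fun z => ∑ a ∈ t, c a z) := fun t => by
    have := fun a => hcd a
    fun_prop
  have hgd : Differentiable ℂ (fun z => ∑' a, c a z) := by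
    rw [← differentiableOn_univ]
    exact hconv.differentiableOn (.of_forall fun t => (hpd t).differentiableOn) isOpen_univ
  refine ⟨_, hgd, fun a ha => ?_⟩
  rw [iff_iteratedDeriv (hgd.analyticAt a) (hL a ha)]
  intro j hj
  have hlim := (iteratedDeriv_tendsto hpd hconv j).tendsto_at (Set.mem_univ a)
  refine tendsto_nhds_unique hlim (tendsto_const_nhds.congr' ?_)
  -- Partial sums that contain the index `a` already have the prescribed jet at `a`.
  filter_upwards [eventually_ge_atTop {(⟨a, ha⟩ : S)}] with t ht
  have hat : (⟨a, ha⟩ : S) ∈ t := ht (by simp)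
  refine ((iff_iteratedDeriv ((hpd t).analyticAt a) (hL a ha)).1 ?_ j hj).symm
  have h2 : JetEq N a (fun z => ∑ b ∈ t.erase ⟨a, ha⟩, c b z) (fun _ => 0) :=
    finset_sum_zero _ fun b hb => hcb b a ha fun h =>
      (Finset.ne_of_mem_erase hb) (Subtype.ext h.symm)
  have h3 := (hca ⟨a, ha⟩).add h2
  simp only [add_zero] at h3
  refine (of_eventuallyEq (.of_forall fun z => ?_)).trans h3
  exact (Finset.add_sum_erase t (fun b => c b z) hat).symm

/-! ### An entire function with simple zeros on the lattice -/

/-- The infinite `r`-Pochhammer product `w ↦ ∏ (1 - r ^ k * w)` is entire, with simple zeros exactly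
at the points `r ^ (-k)`, `k ≥ 0`. -/
lemma exists_pochhammer {r : ℝ} (hr0 : 0 < r) (hr1 : r < 1) :
    ∃ Φ : ℂ → ℂ, Differentiable ℂ Φ ∧
      (∀ w, Φ w = 0 ↔ ∃ k : ℕ, (r : ℂ) ^ k * w = 1) ∧ ∀ w, Φ w = 0 → deriv Φ w ≠ 0 := by
  set Φ : ℂ → ℂ := fun w => ∏' k : ℕ, (1 + -((r : ℂ) ^ k * w)) with hΦ
  have hr1' : ‖(r : ℂ)‖ < 1 := by simpa [abs_of_pos hr0] using hr1
  have hsum : ∀ w : ℂ, Summable fun k : ℕ => ‖-((r : ℂ) ^ k * w)‖ := fun w => by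
    simp only [norm_neg, norm_mul, norm_pow]
    exact (summable_geometric_of_lt_one (norm_nonneg _) hr1').mul_right _
  have hd : Differentiable ℂ Φ := by
    have hconv : HasProdLocallyUniformlyOn (fun (k : ℕ) w => 1 + -((r : ℂ) ^ k * w)) Φ
        Set.univ := by
      apply hasProdLocallyUniformlyOn_of_forall_compact isOpen_univ
      intro K _ hK
      obtain ⟨R, hR⟩ := hK.isBounded.subset_closedBall 0
      have hu : Summable fun k : ℕ => ‖(r : ℂ)‖ ^ k * R :=
        (summable_geometric_of_lt_one (norm_nonneg _) hr1').mul_right _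
      refine hu.hasProdUniformlyOn_nat_one_add hK (.of_forall fun k w hw => ?_) fun k => ?_
      · have := hR hw
        rw [mem_closedBall_zero_iff] at this
        rw [norm_neg, norm_mul, norm_pow]
        gcongr
      · fun_prop
    rw [← differentiableOn_univ]
    refine hconv.differentiableOn (.of_forall fun s => ?_) isOpen_univ
    fun_prop
  -- The functional equation moves each zero to `w = 1`, where simplicity is visible.
  have hfe : ∀ w, Φ w = (1 - w) * Φ (r * w) := fun w => by
    simp only [hΦ]
    rw [tprod_eq_zero_mul']
    · congr 1
      · simp [sub_eq_add_neg]
      · exact tprod_congr fun k => by ring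
    · refine (multipliable_one_add_of_summable (hsum (r * w))).congr fun k => by ring
  have hz : ∀ w, Φ w = 0 ↔ ∃ k : ℕ, (r : ℂ) ^ k * w = 1 := fun w => by
    refine ⟨fun h => ?_, ?_⟩
    · by_contra! hne
      refine tprod_one_add_ne_zero_of_summable (fun k h0 => hne k ?_) (hsum w) h
      linear_combination -h0
    · rintro ⟨k, hk⟩
      induction k generalizing w with
      | zero => rw [hfe, ← hk]; simp
      | succ k ih => rw [hfe, ih (r * w) (by rw [← hk]; ring), mul_zero]
  have hpow : ∀ k : ℕ, (r : ℂ) ^ (k + 1) ≠ 1 := fun k h => by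
    have : r ^ (k + 1) = 1 := by exact_mod_cast h
    exact (pow_lt_one₀ hr0.le hr1 k.succ_ne_zero).ne this
  have hder : ∀ w, deriv Φ w = - Φ (r * w) + (1 - w) * (r * deriv Φ (r * w)) := fun w => by
    have h1 : HasDerivAt (fun w => (1 - w) * Φ (r * w))
        ((-1) * Φ (r * w) + (1 - w) * (deriv Φ (r * w) * (r * 1))) w := by
      refine ((hasDerivAt_id w).const_sub 1).mul ?_
      exact (hd _).hasDerivAt.comp w ((hasDerivAt_id w).const_mul (r : ℂ))
    rw [← funext hfe] at h1
    rw [h1.deriv]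
    ring
  refine ⟨Φ, hd, hz, fun w hw => ?_⟩
  obtain ⟨k, hk⟩ := (hz w).1 hw
  clear hw
  induction k generalizing w with
  | zero =>
    have : w = 1 := by simpa using hk
    subst this
    rw [hder]
    simp only [sub_self, zero_mul, add_zero, ne_eq, neg_eq_zero, hz, not_exists]
    intro k hk'
    exact hpow k (by rw [← hk']; ring)
  | succ k ih =>
    have hk' : (r : ℂ) ^ k * (r * w) = 1 := by rw [← hk]; ring
    rw [hder, (hz _).2 ⟨k, hk'⟩, neg_zero, zero_add]
    refine mul_ne_zero (fun h => ?_) (mul_ne_zero (by exact_mod_cast hr0.ne') (ih _ hk'))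
    refine hpow k ?_
    rw [← hk, ← sub_eq_zero.1 h, mul_one]

lemma exists_sigma : ∃ σ : ℂ → ℂ, Differentiable ℂ σ ∧ (∀ z, σ z = 0 ↔ z ∈ gaussianLattice) ∧
    ∀ z ∈ gaussianLattice, deriv σ z ≠ 0 := by
  set r : ℝ := Real.exp (-(2 * Real.pi)) with hr
  have hr0 : 0 < r := Real.exp_pos _
  have hr1 : r < 1 := Real.exp_lt_one_iff.2 (by have := Real.pi_pos; linarith)
  obtain ⟨Φ, hd, hz, hs⟩ := exists_pochhammer hr0 hr1
  have hpi : (2 * Real.pi * Complex.I : ℂ) ≠ 0 := Complex.two_pi_I_ne_zero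
  have hrk : ∀ (k : ℕ) (x : ℂ), (r : ℂ) ^ k * Complex.exp (2 * Real.pi * Complex.I * x) =
      Complex.exp (2 * Real.pi * Complex.I * (x + k * Complex.I)) := fun k x => by
    rw [hr, Complex.ofReal_exp, ← Complex.exp_nat_mul, ← Complex.exp_add]
    congr 1
    push_cast
    linear_combination (-2 * Real.pi * k : ℂ) * Complex.I_sq
  have hone : ∀ x : ℂ, Complex.exp (2 * Real.pi * Complex.I * x) = 1 ↔ ∃ m : ℤ, x = m := fun x => by
    rw [Complex.exp_eq_one_iff]
    refine exists_congr fun m => ?_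
    rw [mul_comm, mul_left_inj' hpi]
  -- `e₁ z = exp (2πiz)` and `e₂ z = r * exp (-2πiz)`, the latter written with the exponent shifted by `2πi * i = -2π`.
  set e₁ : ℂ → ℂ := fun z => Complex.exp (2 * Real.pi * Complex.I * z) with he₁
  set e₂ : ℂ → ℂ := fun z => Complex.exp (2 * Real.pi * Complex.I * (-z + Complex.I)) with he₂
  have h₁ : ∀ z, Φ (e₁ z) = 0 ↔ ∃ (k : ℕ) (m : ℤ), z + k * Complex.I = m := fun z => by
    simp only [hz, he₁, hrk, hone]
  have h₂ : ∀ z, Φ (e₂ z) = 0 ↔ ∃ (k : ℕ) (m : ℤ), -z + Complex.I + k * Complex.I = m :=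
    fun z => by simp only [hz, he₂, hrk, hone]
  have hdisj : ∀ z, Φ (e₁ z) = 0 → Φ (e₂ z) ≠ 0 := fun z ha hb => by
    obtain ⟨k, m, hk⟩ := (h₁ z).1 ha
    obtain ⟨l, m', hl⟩ := (h₂ z).1 hb
    have := congrArg Complex.im (congrArg₂ (· + ·) hk hl)
    simp at this
    have h3 : (0 : ℝ) ≤ k := k.cast_nonneg
    have h4 : (0 : ℝ) ≤ l := l.cast_nonneg
    linarith
  have hσz : ∀ z, Φ (e₁ z) * Φ (e₂ z) = 0 ↔ z ∈ gaussianLattice := fun z => by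
    rw [mul_eq_zero, h₁, h₂]
    constructor
    · rintro (⟨k, m, h⟩ | ⟨k, m, h⟩)
      · exact ⟨m, -k, by push_cast; linear_combination h⟩
      · exact ⟨-m, k + 1, by push_cast; linear_combination -h⟩
    · rintro ⟨m, n, rfl⟩
      obtain ⟨k, rfl | rfl⟩ := n.eq_nat_or_neg
      · rcases k with _ | k
        · exact .inl ⟨0, m, by simp⟩
        · exact .inr ⟨k, -m, by push_cast; ring⟩
      · exact .inl ⟨k, m, by push_cast; ring⟩
  have hd₁ : ∀ z, HasDerivAt (fun z => Φ (e₁ z))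
      (deriv Φ (e₁ z) * (e₁ z * (2 * Real.pi * Complex.I * 1))) z := fun z =>
    (hd _).hasDerivAt.comp z (((hasDerivAt_id z).const_mul _).cexp)
  have hd₂ : ∀ z, HasDerivAt (fun z => Φ (e₂ z))
      (deriv Φ (e₂ z) * (e₂ z * (2 * Real.pi * Complex.I * (-1)))) z := fun z =>
    (hd _).hasDerivAt.comp z ((((hasDerivAt_id z).neg.add_const _).const_mul _).cexp)
  refine ⟨fun z => Φ (e₁ z) * Φ (e₂ z), fun z => ((hd₁ z).mul (hd₂ z)).differentiableAt, hσz,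
    fun z hzΓ => ?_⟩
  have hD := ((hd₁ z).mul (hd₂ z)).deriv
  rw [show (fun z => Φ (e₁ z) * Φ (e₂ z)) = (fun z => Φ (e₁ z)) * fun z => Φ (e₂ z) from rfl, hD]
  have he₁0 : e₁ z ≠ 0 := Complex.exp_ne_zero _
  have he₂0 : e₂ z ≠ 0 := Complex.exp_ne_zero _
  rcases mul_eq_zero.1 ((hσz z).2 hzΓ) with h | h
  · rw [h, zero_mul, add_zero, mul_one]
    exact mul_ne_zero (mul_ne_zero (hs _ h) (mul_ne_zero he₁0 hpi)) (hdisj z h)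
  · rw [h, mul_zero, zero_add]
    exact mul_ne_zero (fun h' => hdisj z h' h)
      (mul_ne_zero (hs _ h) (mul_ne_zero he₂0 (mul_ne_zero hpi (by simp))))

/-! ### Prescribing the jets of `σ * exp g` -/

lemma exists_local_log {ψ : ℂ → ℂ} {a : ℂ} (hψ : AnalyticAt ℂ ψ a) (h0 : ψ a ≠ 0) :
    ∃ L : ℂ → ℂ, AnalyticAt ℂ L a ∧ ∀ᶠ z in 𝓝 a, Complex.exp (L z) = ψ z := by
  refine ⟨fun z => Complex.log (ψ a) + Complex.log (ψ z / ψ a),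
    analyticAt_const.add ((hψ.div_const).clog (by simp [div_self h0])), ?_⟩
  filter_upwards [hψ.continuousAt.eventually_ne h0] with z hz
  rw [Complex.exp_add, Complex.exp_log h0, Complex.exp_log (div_ne_zero hz h0)]
  field_simp

lemma gaussianLattice_countable : gaussianLattice.Countable := by
  refine (Set.countable_range fun x : ℤ × ℤ => (x.1 : ℂ) + x.2 * Complex.I).mono ?_
  rintro z ⟨m, n, rfl⟩
  exact ⟨(m, n), rfl⟩

lemma gaussianLattice_inter_closedBall_finite (R : ℝ) :
    (gaussianLattice ∩ Metric.closedBall 0 R).Finite := by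
  refine ((Set.finite_Icc (-⌈R⌉) ⌈R⌉).prod (Set.finite_Icc (-⌈R⌉) ⌈R⌉)).image
    (fun x : ℤ × ℤ => (x.1 : ℂ) + x.2 * Complex.I) |>.subset ?_
  rintro z ⟨⟨m, n, rfl⟩, hz⟩
  rw [mem_closedBall_zero_iff] at hz
  have hm := (Complex.abs_re_le_norm _).trans (hz.trans (Int.le_ceil R))
  have hn := (Complex.abs_im_le_norm _).trans (hz.trans (Int.le_ceil R))
  simp only [Complex.add_re, Complex.add_im, Complex.mul_re, Complex.mul_im, Complex.intCast_re,
    Complex.intCast_im, Complex.I_re, Complex.I_im, mul_zero, mul_one, sub_zero, zero_add,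
    add_zero] at hm hn
  exact ⟨(m, n), ⟨abs_le.1 (by exact_mod_cast hm), abs_le.1 (by exact_mod_cast hn)⟩, rfl⟩

lemma iteratedDeriv_polynomial_shift (R : Polynomial ℂ) (a : ℂ) (j : ℕ) :
    iteratedDeriv j (fun z => R.eval (z - a)) a = (j.factorial : ℂ) * R.coeff j := by
  have h : ∀ j : ℕ, iteratedDeriv j (fun z => R.eval (z - a)) =
      fun z => (Polynomial.derivative^[j] R).eval (z - a) := fun j => by
    induction j with
    | zero => simp
    | succ j ih =>
      rw [iteratedDeriv_succ, ih, Function.iterate_succ_apply']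
      funext z
      rw [deriv_comp_sub_const (f := fun z => (Polynomial.derivative^[j] R).eval z)]
      exact Polynomial.deriv _
  rw [h]
  dsimp only
  rw [sub_self, ← Polynomial.coeff_zero_eq_eval_zero, Polynomial.coeff_iterate_derivative]
  simp [Nat.descFactorial_self]

/-- Lemma 4.2 (kob.l1): existence of an entire function vanishing exactly on the
Gaussian lattice, with prescribed Taylor polynomial `P(ξ - q)` up to order `n` at each
lattice point `q`, and with prescribed Taylor expansion `Q` at a given point `p` off the
lattice. -/
theorem stmt_0 (n : ℕ) (P : Polynomial ℂ) (hPdeg : P.natDegree = n)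
    (hP0 : P.eval 0 = 0) (hP1 : P.derivative.eval 0 = 1)
    (p : ℂ) (hp : p ∉ gaussianLattice)
    (Q : Polynomial ℂ) (hQ0 : Q.eval 0 ≠ 0) :
    ∃ h : ℂ → ℂ, Differentiable ℂ h ∧
      (∀ ξ : ℂ, h ξ = 0 ↔ ξ ∈ gaussianLattice) ∧
      (∀ q ∈ gaussianLattice, ∀ j : ℕ, j ≤ n →
        iteratedDeriv j h q = (j.factorial : ℂ) * P.coeff j) ∧
      (∀ j : ℕ, j ≤ Q.natDegree →
        iteratedDeriv j h p = (j.factorial : ℂ) * Q.coeff j) := by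
  classical
  obtain ⟨σ, hσ, hσ0, hσ1⟩ := exists_sigma
  have hσp : σ p ≠ 0 := fun h => hp ((hσ0 p).1 h)
  set S : Set ℂ := insert p gaussianLattice with hS
  -- `T a` is the polynomial whose shift `T a (z - a)` is prescribed at the node `a`.
  set T : ℂ → Polynomial ℂ := fun a => if a = p then Q else P with hT
  have hTp : T p = Q := if_pos rfl
  have hTq : ∀ q ∈ gaussianLattice, T q = P := fun q hq =>
    if_neg fun h : q = p => hp (h ▸ hq)
  have hev : ∀ (R : Polynomial ℂ) (a : ℂ), Differentiable ℂ fun z => R.eval (z - a) :=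
    fun R a => R.differentiable.comp (by fun_prop)
  have hloc : ∀ a : ℂ, a ∈ S → ∃ L : ℂ → ℂ, AnalyticAt ℂ L a ∧
      ∀ᶠ z in 𝓝 a, σ z * Complex.exp (L z) = (T a).eval (z - a) := by
    rintro a (rfl | ha)
    · obtain ⟨L, hL, e⟩ := exists_local_log
        (((hev Q a).analyticAt a).div (hσ.analyticAt a) hσp) (by simp [hσp, hQ0])
      refine ⟨L, hL, ?_⟩
      filter_upwards [e, hσ.continuous.continuousAt.eventually_ne hσp] with z hz hz'
      rw [hz, hTp, Pi.div_apply]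
      field_simp
    · -- Both `P (z - a)` and `σ z` have a simple zero at `a`; divide it out of each.
      have hv := differentiable_dslope hσ a
      have hva : dslope σ a a ≠ 0 := by simpa [dslope_same] using hσ1 a ha
      have hd0 : P.divX.eval 0 = 1 := by
        rw [← hP1, ← Polynomial.coeff_zero_eq_eval_zero, ← Polynomial.coeff_zero_eq_eval_zero,
          Polynomial.coeff_divX, Polynomial.coeff_derivative]
        simp
      obtain ⟨L, hL, e⟩ := exists_local_log
        (((hev P.divX a).analyticAt a).div (hv.analyticAt a) hva) (by simp [hd0, hσ1 a ha])
      refine ⟨L, hL, ?_⟩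
      filter_upwards [e, hv.continuous.continuousAt.eventually_ne hva] with z hz hz'
      have hP : P.eval (z - a) = (z - a) * P.divX.eval (z - a) := by
        conv_lhs => rw [← Polynomial.X_mul_divX_add P]
        simp [Polynomial.coeff_zero_eq_eval_zero, hP0]
      rw [hz, hTq a ha, hP, JetEq.eq_dslope σ a z, (hσ0 a).2 ha, Pi.div_apply]
      field_simp
      ring
  choose! L hL hLe using hloc
  have hτ1 : ∀ z, HasDerivAt (fun z => σ z * (z - p)) (deriv σ z * (z - p) + σ z * 1) z :=
    fun z => (hσ z).hasDerivAt.mul ((hasDerivAt_id z).sub_const p)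
  obtain ⟨g, hg, hgj⟩ := exists_interpolation (S := S) (τ := fun z => σ z * (z - p))
    (gaussianLattice_countable.insert p)
    (fun R => ((gaussianLattice_inter_closedBall_finite R).insert p).subset (by
      rintro z ⟨rfl | h, h'⟩
      exacts [.inl rfl, .inr ⟨h, h'⟩]))
    (fun z => (hτ1 z).differentiableAt)
    (by
      rintro a (rfl | ha)
      · simp
      · simp [(hσ0 a).2 ha])
    (by
      rintro a (rfl | ha)
      · rw [(hτ1 a).deriv]; simpa using hσp
      · rw [(hτ1 a).deriv, (hσ0 a).2 ha, zero_mul, add_zero]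
        exact mul_ne_zero (hσ1 a ha) (sub_ne_zero.2 fun h => hp (h ▸ ha)))
    (max n Q.natDegree + 1) L hL
  have hh : Differentiable ℂ fun z => σ z * Complex.exp (g z) := hσ.mul hg.cexp
  have hjet : ∀ a ∈ S, ∀ j ≤ max n Q.natDegree,
      iteratedDeriv j (fun z => σ z * Complex.exp (g z)) a =
        (j.factorial : ℂ) * (T a).coeff j := fun a ha j hj => by
    rw [← iteratedDeriv_polynomial_shift (T a) a j]
    refine (JetEq.iff_iteratedDeriv (hh.analyticAt a) ((hev (T a) a).analyticAt a)).1 ?_ j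
      (Nat.lt_succ_of_le hj)
    exact (JetEq.mul_left (hσ.analyticAt a)
      ((hgj a ha).cexp (hg.analyticAt a) (hL a ha) (Nat.succ_pos _))).trans
      (JetEq.of_eventuallyEq (hLe a ha))
  refine ⟨fun z => σ z * Complex.exp (g z), hh, fun z => ?_, fun q hq j hj => ?_, fun j hj => ?_⟩
  · simp [Complex.exp_ne_zero, hσ0]
  · rw [hjet q (.inr hq) j (hj.trans (le_max_left _ _)), hTq q hq]
  · rw [hjet p (.inl rfl) j (hj.trans (le_max_right _ _)), hTp]
end

section
/- Let k and l be relatively prime natural numbers with k > l ≥ 2. Then the set {(u·z^l, v·z^k) ∈ ℂ² : u, v, z ∈ ℂ, u^k − v^l = 1, z ≠ 0} equals the set {(x, y) ∈ ℂ² : x^k − y^l ≠ 0}. In other words, the map χ : (u, v, z) ↦ (u·z^l, v·z^k), restricted to Y* = {(u, v, z) : u^k − v^l = 1, z ≠ 0}, has image exactly the complement in ℂ² of the curve L₀ = {(x, y) : x^k = y^l}. -/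
/-!
The polynomial `x ^ k - y ^ l` is weighted homogeneous for `(x, y) ↦ (x z ^ l, y z ^ k)`, of weight
`k * l`. On `Y*` its pullback along `χ` is therefore `z ^ (k * l) ≠ 0`. Conversely, off the curve
`x ^ k = y ^ l`, choosing `z` with `z ^ (k * l) = x ^ k - y ^ l` (possible over `ℂ`) gives the
preimage `(x / z ^ l, y / z ^ k, z)`.
-/

/-- Image claim of Lemma 3.3 (ram.l2): the image of `Y* = L × ℂ*` under
`χ(u, v, z) = (u·z^l, v·z^k)` is exactly the complement of the curve `x^k = y^l`. -/
theorem stmt_3 (k l : ℕ) (hcop : Nat.Coprime k l) (hkl : k > l) (hl : 2 ≤ l) :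
    {w : ℂ × ℂ | ∃ u v z : ℂ, u ^ k - v ^ l = 1 ∧ z ≠ 0 ∧
        w = (u * z ^ l, v * z ^ k)} =
      {w : ℂ × ℂ | w.1 ^ k - w.2 ^ l ≠ 0} := by
  -- `x ^ k - y ^ l` is weighted homogeneous: scaling by `z` multiplies it by `z ^ (k * l)`.
  have key : ∀ u v z : ℂ,
      (u * z ^ l) ^ k - (v * z ^ k) ^ l = (u ^ k - v ^ l) * z ^ (k * l) := by
    intro u v z
    rw [mul_pow, mul_pow, ← pow_mul, ← pow_mul, mul_comm l k]
    ring
  ext ⟨x, y⟩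
  simp only [Set.mem_ofPred_eq, Prod.mk.injEq]
  constructor
  · rintro ⟨u, v, z, h, hz, rfl, rfl⟩
    rw [key, h, one_mul]
    exact pow_ne_zero _ hz
  · intro hw
    have hpos : 0 < k * l := Nat.mul_pos (by omega) (by omega)
    -- A `(k * l)`-th root `z` of `x ^ k - y ^ l` rescales `(x, y)` onto the curve `L`.
    obtain ⟨z, hz⟩ := IsAlgClosed.exists_pow_nat_eq (x ^ k - y ^ l) hpos
    have hz0 : z ≠ 0 := by
      rintro rfl
      exact hw (by rw [← hz, zero_pow hpos.ne'])
    have hx : x = x / z ^ l * z ^ l := (div_mul_cancel₀ x (pow_ne_zero _ hz0)).symm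
    have hy : y = y / z ^ k * z ^ k := (div_mul_cancel₀ y (pow_ne_zero _ hz0)).symm
    refine ⟨x / z ^ l, y / z ^ k, z, ?_, hz0, hx, hy⟩
    have h := key (x / z ^ l) (y / z ^ k) z
    rw [← hx, ← hy, ← hz] at h
    exact mul_right_cancel₀ (pow_ne_zero (k * l) hz0) (by rw [one_mul]; exact h.symm)
end

section
/- Let k and l be relatively prime natural numbers with k > l ≥ 2. Suppose u, v, z, u′, v′, z′ ∈ ℂ satisfy u^k − v^l = 1, u′^k − v′^l = 1, z ≠ 0, and z′ ≠ 0. Then (u·z^l, v·z^k) = (u′·z′^l, v′·z′^k) if and only if there exists λ ∈ ℂ with λ^{kl} = 1 such that u′ = λ^l·u, v′ = λ^k·v, and z′ = λ^{−1}·z. Consequently the fibers of the map χ : (u, v, z) ↦ (u·z^l, v·z^k) on Y* = {(u,v,z) : u^k − v^l = 1, z ≠ 0} are exactly the orbits of the μ_{kl}-action, so χ(Y*) is the quotient Y*/μ_{kl} as a set. -/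
/-!
If `(x, y)` is the image of `(u, v, z)` with `u ^ k - v ^ l = 1`, then
`x ^ k - y ^ l = z ^ (k * l)`. Hence two points of the same fiber have third coordinates whose
quotient `lam = z / z'` is a `kl`-th root of unity, and dividing the two coordinate equations by
powers of `z'` shows that `lam` carries the first point to the second. Conversely, the powers of
`lam` cancel in `χ`.
-/

/-- Quotient claim of Lemma 3.3 (ram.l2): two points of `Y* = L × ℂ*` have the same image
under `χ(u, v, z) = (u·z^l, v·z^k)` if and only if they lie in the same orbit of the
`μ_{kl}`-action `λ·(u, v, z) = (λ^l u, λ^k v, λ⁻¹ z)`. -/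
theorem stmt_5 (k l : ℕ) (hcop : Nat.Coprime k l) (hkl : k > l) (hl : 2 ≤ l)
    (u v z u' v' z' : ℂ)
    (hY : u ^ k - v ^ l = 1) (hY' : u' ^ k - v' ^ l = 1)
    (hz : z ≠ 0) (hz' : z' ≠ 0) :
    (u * z ^ l, v * z ^ k) = (u' * z' ^ l, v' * z' ^ k) ↔
      ∃ lam : ℂ, lam ^ (k * l) = 1 ∧ u' = lam ^ l * u ∧ v' = lam ^ k * v ∧
        z' = lam⁻¹ * z := by
  rw [Prod.mk.injEq]
  constructor
  · rintro ⟨h1, h2⟩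
    -- On `Y*` the image `(x, y)` of `χ` determines `z` up to `μ_{kl}`: `x ^ k - y ^ l = z ^ (k * l)`.
    have key : ∀ a b c : ℂ, a ^ k - b ^ l = 1 →
        (a * c ^ l) ^ k - (b * c ^ k) ^ l = c ^ (k * l) := by
      intro a b c h
      rw [mul_pow, mul_pow, ← pow_mul, ← pow_mul, mul_comm l k, ← sub_mul, h, one_mul]
    have hzz : z ^ (k * l) = z' ^ (k * l) := by
      rw [← key u v z hY, ← key u' v' z' hY', h1, h2]
    refine ⟨z / z', ?_, ?_, ?_, ?_⟩
    · rw [div_pow, hzz, div_self (pow_ne_zero _ hz')]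
    · rw [div_pow, div_mul_eq_mul_div, eq_div_iff (pow_ne_zero _ hz'), ← h1, mul_comm]
    · rw [div_pow, div_mul_eq_mul_div, eq_div_iff (pow_ne_zero _ hz'), ← h2, mul_comm]
    · rw [inv_div, div_mul_cancel₀ _ hz]
  · rintro ⟨lam, -, rfl, rfl, rfl⟩
    have h0 : lam ≠ 0 := by
      rintro rfl
      simp at hz'
    have cancel : ∀ (n : ℕ) (a : ℂ), a * z ^ n = lam ^ n * a * (lam⁻¹ * z) ^ n := by
      intro n a
      rw [mul_pow, inv_pow]
      field_simp
    exact ⟨cancel l u, cancel k v⟩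
end

section
/- Let g₀ : ℂ → ℂ and h₀ : ℂ → ℂ be entire functions, neither of which is identically zero. Then the image of the holomorphic map Φ : ℂ² → ℂ² defined by Φ(ξ, c) = (ξ, e^{c·g₀(ξ)}·h₀(ξ)) is dense in ℂ² (in the standard topology). -/
/-!
By the identity theorem, the non-vanishing set of a nonzero entire function is open and dense
(`dense_ne_zero`), so `{ξ | g₀ ξ ≠ 0 ∧ h₀ ξ ≠ 0}` is dense in `ℂ`. Over such a `ξ` the fibre of the
image is all of `ℂ \ {0}`, because `exp` is onto `ℂ \ {0}`. Hence the image contains a product of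
two dense sets.
-/

theorem dense_ne_zero {f : ℂ → ℂ} (hf : Differentiable ℂ f) (hne : ∃ z, f z ≠ 0) :
    Dense {z | f z ≠ 0} := by
  obtain ⟨z, hz⟩ := hne
  intro x
  rw [mem_closure_iff_frequently]
  intro hx
  have h0 : ∀ᶠ y in nhds x, f y = 0 := hx.mono fun y hy => not_not.mp hy
  have han : AnalyticOnNhd ℂ f Set.univ := fun y _ => hf.analyticAt y
  exact hz (han.eqOn_zero_of_preconnected_of_eventuallyEq_zero isPreconnected_univ
    (Set.mem_univ x) h0 (Set.mem_univ z))

/-- Analytic core of Lemma 4.7 (kob.l3): for entire functions `g₀, h₀`, neither identically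
zero, the image of `Φ(ξ, c) = (ξ, e^{c·g₀(ξ)}·h₀(ξ))` is dense in `ℂ²`. -/
theorem stmt_7 (g₀ h₀ : ℂ → ℂ) (hg₀ : Differentiable ℂ g₀) (hh₀ : Differentiable ℂ h₀)
    (hg₀ne : ∃ ξ : ℂ, g₀ ξ ≠ 0) (hh₀ne : ∃ ξ : ℂ, h₀ ξ ≠ 0) :
    Dense (Set.range (fun w : ℂ × ℂ =>
      (w.1, Complex.exp (w.2 * g₀ w.1) * h₀ w.1))) := by
  have hopen : IsOpen {z | g₀ z ≠ 0} := isOpen_ne_fun hg₀.continuous continuous_const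
  have hd := (dense_ne_zero hg₀ hg₀ne).inter_of_isOpen_left (dense_ne_zero hh₀ hh₀ne) hopen
  refine (hd.prod (dense_compl_singleton (0 : ℂ))).mono ?_
  rintro ⟨ξ, w⟩ ⟨⟨hg, hh⟩, hw⟩
  have hg' : g₀ ξ ≠ 0 := hg
  have hh' : h₀ ξ ≠ 0 := hh
  have hw' : w ≠ 0 := hw
  refine ⟨(ξ, Complex.log (w / h₀ ξ) / g₀ ξ), ?_⟩
  simp only [Prod.mk.injEq, true_and]
  rw [div_mul_cancel₀ _ hg', Complex.exp_log (div_ne_zero hw' hh'), div_mul_cancel₀ _ hh']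
end

section
/- Let L₀ = {(x, y) ∈ ℂ² : x³ = y²}. For every point p ∈ ℂ² \ L₀ and every vector ν ∈ ℂ², there exists a holomorphic map h : ℂ → ℂ² such that h(0) = p, the derivative of h at 0 equals ν, and for every ξ ∈ ℂ the point h(ξ) lies in (ℂ² \ L₀) ∪ {(1, 1)}; that is, h meets the curve L₀ only at the single point (1, 1). -/
/-!
The curve is built in two stages. First choose polynomials `X`, `Y` without common zero whose
1-jet at `0` is `(p, ν)`. Since `p` is off the cubic, `D = X³ - Y²` is a nonzero polynomial, so
`(X, Y)` meets the cubic only over the finitely many roots of `D`, and there `X`, `Y` are both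
nonzero.

Then move the curve along the orbits of the `ℂ*`-action `t • (x, y) = (t²x, t³y)`, which preserves
the cubic and acts simply transitively on its smooth part: if `x³ = y² ≠ 0`, then `t = x / y` takes
`(x, y)` to `(1, 1)`. Take `t = exp φ`, where `φ` is a polynomial divisible by `ξ²` (so the 1-jet
at `0` is unchanged) which interpolates `log (X / Y)` at the roots of `D`. The curve
`(exp (2φ) X, exp (3φ) Y)` meets the cubic only over the roots of `D`, and there equals `(1, 1)`.
-/

/-- The cuspidal cubic `x³ = y²` in `ℂ²`. -/
def cuspidalCubic : Set (ℂ × ℂ) := {w | w.1 ^ 3 = w.2 ^ 2}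

open Polynomial in
/-- Any 1-jet with nonzero base point is the 1-jet at `0` of a polynomial curve in `ℂ²` that
avoids the origin. -/
lemma exists_polynomial_curve_ne_zero (p ν : ℂ × ℂ) (hp : p ≠ 0) :
    ∃ X Y : ℂ[X], X.eval 0 = p.1 ∧ Y.eval 0 = p.2 ∧
      X.derivative.eval 0 = ν.1 ∧ Y.derivative.eval 0 = ν.2 ∧
      ∀ z, X.eval z = 0 → Y.eval z ≠ 0 := by
  obtain ⟨p₁, p₂⟩ := p
  obtain ⟨ν₁, ν₂⟩ := ν
  -- A quadratic term `(a, b) ξ²` is needed only when `ν` is parallel to `p`; it must then be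
  -- transverse to `p`.
  obtain ⟨a, b, hab⟩ : ∃ a b : ℂ, ∀ z : ℂ,
      z * ((p₂ * ν₁ - p₁ * ν₂) + (p₂ * a - p₁ * b) * z) = 0 → z = 0 := by
    by_cases hd : p₂ * ν₁ - p₁ * ν₂ = 0
    · by_cases h1 : p₁ = 0
      · have h2 : p₂ ≠ 0 := fun h2 => hp (by simp [h1, h2])
        refine ⟨1, 0, fun z hz => ?_⟩
        rw [hd] at hz
        simpa [h1, h2] using hz
      · refine ⟨0, 1, fun z hz => ?_⟩
        rw [hd] at hz
        simpa [h1] using hz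
    · refine ⟨0, 0, fun z hz => ?_⟩
      simpa [hd] using hz
  refine ⟨C p₁ + C ν₁ * X + C a * X ^ 2, C p₂ + C ν₂ * X + C b * X ^ 2, by simp, by simp,
    by simp, by simp, fun z h1 h2 => hp ?_⟩
  simp only [eval_add, eval_mul, eval_C, eval_X, eval_pow] at h1 h2
  have hz : z = 0 := hab z (by linear_combination p₂ * h1 - p₁ * h2)
  subst hz
  simp_all

/-- ℂ²-realization of Theorem 4.1 (kob.t1) with `k = 3`, `l = 2`: through every point of
`ℂ² \ L₀` and every tangent vector there is an entire curve meeting the cuspidal cubic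
`L₀` only at the point `(1, 1)`. -/
theorem stmt_8 (p : ℂ × ℂ) (hp : p ∉ cuspidalCubic) (ν : ℂ × ℂ) :
    ∃ h : ℂ → ℂ × ℂ, Differentiable ℂ h ∧ h 0 = p ∧ deriv h 0 = ν ∧
      ∀ ξ : ℂ, h ξ ∈ cuspidalCubicᶜ ∪ {((1 : ℂ), (1 : ℂ))} := by
  have hp' : p.1 ^ 3 ≠ p.2 ^ 2 := hp
  have hp0 : p ≠ 0 := by
    rintro rfl
    simp at hp'
  obtain ⟨P, Q, hP, hQ, hP', hQ', hPQ⟩ := exists_polynomial_curve_ne_zero p ν hp0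
  have hD0 : (P ^ 3 - Q ^ 2).eval 0 ≠ 0 := by
    simpa [hP, hQ, sub_eq_zero] using hp'
  have hD : P ^ 3 - Q ^ 2 ≠ 0 := by
    intro h
    simp [h] at hD0
  set ψ : Polynomial ℂ := Lagrange.interpolate (P ^ 3 - Q ^ 2).roots.toFinset id
    (fun z => Complex.log (P.eval z / Q.eval z) / z ^ 2) with hψ
  have hφ : ∀ z, P.eval z ^ 3 = Q.eval z ^ 2 →
      (Polynomial.X ^ 2 * ψ).eval z = Complex.log (P.eval z / Q.eval z) := by
    intro z hz
    have hz0 : z ≠ 0 := by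
      rintro rfl
      apply hp'
      rw [← hP, ← hQ, hz]
    have hmem : z ∈ (P ^ 3 - Q ^ 2).roots.toFinset := by
      simp [hD, hz]
    have := Lagrange.eval_interpolate_at_node
      (fun z => Complex.log (P.eval z / Q.eval z) / z ^ 2)
      (Function.injective_id.injOn) hmem
    rw [id, ← hψ] at this
    rw [Polynomial.eval_mul, this]
    simp only [Polynomial.eval_pow, Polynomial.eval_X]
    field_simp
  set φ : Polynomial ℂ := Polynomial.X ^ 2 * ψ with hφdef
  have hφ0 : φ.eval 0 = 0 := by simp [hφdef]
  have hφ0' : φ.derivative.eval 0 = 0 := by simp [hφdef]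
  have hder : ∀ (n : ℂ) (R : Polynomial ℂ) (z : ℂ), HasDerivAt
      (fun z => Complex.exp (n * φ.eval z) * R.eval z)
      (Complex.exp (n * φ.eval z) * (n * φ.derivative.eval z) * R.eval z +
        Complex.exp (n * φ.eval z) * R.derivative.eval z) z := fun n R z =>
    (((φ.hasDerivAt z).const_mul n).cexp).mul (R.hasDerivAt z)
  refine ⟨fun z => (Complex.exp (2 * φ.eval z) * P.eval z, Complex.exp (3 * φ.eval z) * Q.eval z),
    fun z => ((hder 2 P z).prodMk (hder 3 Q z)).differentiableAt, ?_, ?_, fun z => ?_⟩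
  · simp [hφ0, hP, hQ]
  · rw [((hder 2 P 0).prodMk (hder 3 Q 0)).deriv]
    simp [hφ0, hφ0', hP', hQ']
  · have e2 : Complex.exp (2 * φ.eval z) = Complex.exp (φ.eval z) ^ 2 := by
      rw [← Complex.exp_nat_mul]; norm_num
    have e3 : Complex.exp (3 * φ.eval z) = Complex.exp (φ.eval z) ^ 3 := by
      rw [← Complex.exp_nat_mul]; norm_num
    rw [Set.mem_union, Set.mem_compl_iff, ← imp_iff_not_or]
    intro hmem
    have hmem : (Complex.exp (2 * φ.eval z) * P.eval z) ^ 3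
      = (Complex.exp (3 * φ.eval z) * Q.eval z) ^ 2 := hmem
    rw [e2, e3] at hmem
    have hz : P.eval z ^ 3 = Q.eval z ^ 2 := by
      refine mul_left_cancel₀ (pow_ne_zero 6 (Complex.exp_ne_zero (φ.eval z))) ?_
      linear_combination hmem
    have hPz : P.eval z ≠ 0 := by
      intro h
      refine hPQ z h ?_
      simpa [h] using hz.symm
    have hQz : Q.eval z ≠ 0 := by
      intro h
      exact hPz (by simpa [h] using hz)
    have hexp : Complex.exp (φ.eval z) = P.eval z / Q.eval z := by
      rw [hφ z hz, Complex.exp_log (div_ne_zero hPz hQz)]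
    rw [Set.mem_singleton_iff]
    beta_reduce
    rw [e2, e3, hexp]
    refine Prod.ext ?_ ?_
    · change (P.eval z / Q.eval z) ^ 2 * P.eval z = 1
      field_simp
      linear_combination hz
    · change (P.eval z / Q.eval z) ^ 3 * Q.eval z = 1
      field_simp
      linear_combination hz
end

section
/- Let L₀ = {(x, y) ∈ ℂ² : x³ = y²}. For every point p ∈ ℂ² \ L₀ and every vector ν ∈ ℂ², there exists a holomorphic map h = (h₁, h₂) : ℂ → ℂ² such that h(0) = p, the derivative of h at 0 equals ν, h(ξ) ∈ (ℂ² \ L₀) ∪ {(1, 1)} for every ξ ∈ ℂ, and moreover at every point ξ₀ ∈ ℂ with h(ξ₀) = (1, 1) the holomorphic function ξ ↦ h₁(ξ)³ − h₂(ξ)² vanishes to order at least 6 (i.e. its iterated derivatives of orders 0 through 5 all vanish at ξ₀). -/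
open Filter Topology Complex PeriodPair

/-! ### An entire function with simple zeros on a lattice -/

/-- An infinite product `∏ (1 + F i)` of entire functions is entire if it converges normally on
every disc: `u r` is a summable majorant on the disc of radius `r`. -/
lemma differentiable_tprod_one_add {ι : Type*} {F : ι → ℂ → ℂ} {u : ℝ → ι → ℝ}
    (hu : ∀ r, Summable (u r)) (hF : ∀ i, Differentiable ℂ (F i))
    (hb : ∀ r w, ‖w‖ < r → ∀ i, ‖F i w‖ ≤ u r i) :
    Differentiable ℂ (fun w => ∏' i, (1 + F i w)) := by
  intro w
  have hlim := (hu (‖w‖ + 1)).hasProdLocallyUniformlyOn_one_add (f := F)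
    (K := Metric.ball 0 (‖w‖ + 1)) Metric.isOpen_ball
    (.of_forall fun i x hx => hb _ _ (by simpa using hx) i)
    (fun i => (hF i).continuous.continuousOn)
  have hd := TendstoLocallyUniformlyOn.differentiableOn
    (hasProdLocallyUniformlyOn_iff_tendstoLocallyUniformlyOn.mp hlim)
    (.of_forall fun s => DifferentiableOn.fun_finsetProd fun i _ =>
      ((hF i).const_add 1).differentiableOn) Metric.isOpen_ball
  exact hd.differentiableAt (Metric.isOpen_ball.mem_nhds (by simp))

/-- The term `f k` of the theta product `∏ (1 + f k)`: its factor `1 + f k` vanishes exactly on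
the row `ℤ - k τ` of the lattice `ℤ + ℤ τ`, and the sign in the exponent is chosen so that the
terms decay geometrically as `|k| → ∞`. -/
noncomputable def thetaTerm (τ : ℂ) (k : ℤ) (w : ℂ) : ℂ :=
  if 0 ≤ k then -exp (2 * Real.pi * I * (w + k * τ)) else -exp (-(2 * Real.pi * I * (w + k * τ)))

lemma differentiable_thetaTerm (τ : ℂ) (k : ℤ) : Differentiable ℂ (thetaTerm τ k) := by
  unfold thetaTerm
  split_ifs <;> fun_prop

lemma one_add_thetaTerm_eq_zero_iff {τ : ℂ} {k : ℤ} {w : ℂ} :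
    1 + thetaTerm τ k w = 0 ↔ ∃ m : ℤ, w = m - k * τ := by
  have h2 : (2 * Real.pi * I : ℂ) ≠ 0 := Complex.two_pi_I_ne_zero
  have key : 1 + thetaTerm τ k w = 0 ↔ exp (2 * Real.pi * I * (w + k * τ)) = 1 := by
    unfold thetaTerm
    split_ifs
    · rw [← sub_eq_add_neg, sub_eq_zero, eq_comm]
    · rw [← sub_eq_add_neg, sub_eq_zero, eq_comm, exp_neg, inv_eq_one]
  rw [key, exp_eq_one_iff]
  refine exists_congr fun m => ?_
  rw [mul_comm, mul_left_inj' h2, eq_sub_iff_add_eq]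

lemma deriv_thetaTerm_ne_zero (τ : ℂ) (k : ℤ) (w : ℂ) : deriv (thetaTerm τ k) w ≠ 0 := by
  have h2 : (2 * Real.pi * I : ℂ) ≠ 0 := Complex.two_pi_I_ne_zero
  have h0 : HasDerivAt (fun w : ℂ => 2 * Real.pi * I * (w + k * τ)) (2 * Real.pi * I) w := by
    simpa using ((hasDerivAt_id w).add_const (k * τ)).const_mul (2 * Real.pi * I : ℂ)
  unfold thetaTerm
  split_ifs
  · rw [h0.cexp.fun_neg.deriv]
    exact neg_ne_zero.mpr (mul_ne_zero (exp_ne_zero _) h2)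
  · rw [h0.fun_neg.cexp.fun_neg.deriv]
    exact neg_ne_zero.mpr (mul_ne_zero (exp_ne_zero _) (neg_ne_zero.mpr h2))

lemma norm_thetaTerm_le {τ : ℂ} {r : ℝ} {w : ℂ} (hw : ‖w‖ < r) (k : ℤ) :
    ‖thetaTerm τ k w‖ ≤ Real.exp (2 * Real.pi * r) * Real.exp (-(2 * Real.pi * τ.im) * |(k : ℝ)|) := by
  have him : |w.im| < r := (abs_im_le_norm w).trans_lt hw
  obtain ⟨h1, h2⟩ := abs_lt.mp him
  have hre : (2 * Real.pi * I * (w + k * τ)).re = -(2 * Real.pi * (w.im + k * τ.im)) := by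
    simp
  have hpi := Real.pi_pos
  unfold thetaTerm
  rw [← Real.exp_add]
  split_ifs with hk
  · rw [norm_neg, norm_exp, hre, Real.exp_le_exp, abs_of_nonneg (by exact_mod_cast hk)]
    nlinarith
  · rw [norm_neg, norm_exp, neg_re, hre, Real.exp_le_exp,
      abs_of_neg (by exact_mod_cast not_le.mp hk)]
    nlinarith

lemma summable_exp_neg_abs {c : ℝ} (hc : 0 < c) : Summable fun k : ℤ => Real.exp (-c * |(k : ℝ)|) := by
  have h : Summable fun n : ℕ => Real.exp (-c * n) := by
    simpa [mul_comm] using Real.summable_exp_nat_mul_iff.mpr (neg_lt_zero.mpr hc)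
  exact .of_nat_of_neg (by simpa using h) (by simpa using h)

/-- A holomorphic theta function: an entire function with simple zeros exactly on `ℤ + ℤ τ`. -/
lemma exists_entire_simple_zeros {τ : ℂ} (hτ : 0 < τ.im) :
    ∃ θ : ℂ → ℂ, Differentiable ℂ θ ∧ (∀ w, θ w = 0 ↔ ∃ m n : ℤ, w = m + n * τ) ∧
      ∀ w, θ w = 0 → deriv θ w ≠ 0 := by
  classical
  let u : ℝ → ℤ → ℝ := fun r k =>
    Real.exp (2 * Real.pi * r) * Real.exp (-(2 * Real.pi * τ.im) * |(k : ℝ)|)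
  have hu : ∀ r, Summable (u r) := fun r =>
    (summable_exp_neg_abs (by have := Real.pi_pos; positivity)).mul_left _
  have hsum : ∀ w, Summable fun k => ‖thetaTerm τ k w‖ := fun w =>
    .of_nonneg_of_le (fun _ => norm_nonneg _)
      (fun k => norm_thetaTerm_le (lt_add_one ‖w‖) k) (hu (‖w‖ + 1))
  -- The product with the factor of index `k` removed.
  let F : ℤ → ℤ → ℂ → ℂ := fun k j w => if j = k then 0 else thetaTerm τ j w
  have hFle : ∀ k j w, ‖F k j w‖ ≤ ‖thetaTerm τ j w‖ := by
    intro k j w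
    simp only [F]
    split_ifs <;> simp
  have hFsum : ∀ k w, Summable fun j => ‖F k j w‖ := fun k w =>
    .of_nonneg_of_le (fun _ => norm_nonneg _) (fun j => hFle k j w) (hsum w)
  have hFd : ∀ k, Differentiable ℂ (fun w => ∏' j, (1 + F k j w)) := by
    intro k
    refine differentiable_tprod_one_add hu (fun j => ?_)
      (fun r w hw j => (hFle k j w).trans (norm_thetaTerm_le hw j))
    by_cases h : j = k
    · simp [F, h]
    · simpa [F, h] using differentiable_thetaTerm τ j
  have hsplit : ∀ k w, ∏' j, (1 + thetaTerm τ j w) =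
      (1 + thetaTerm τ k w) * ∏' j, (1 + F k j w) := by
    intro k w
    have hupd : Function.update (fun j => 1 + thetaTerm τ j w) k 1 = fun j => 1 + F k j w := by
      funext j
      by_cases h : j = k
      · subst h; simp [F]
      · simp [F, h]
    rw [Multipliable.tprod_eq_mul_tprod_ite' k
      (by rw [hupd]; exact multipliable_one_add_of_summable (hFsum k w))]
    congr 1
    refine tprod_congr fun j => ?_
    by_cases h : j = k <;> simp [F, h]
  have hz : ∀ w, ∏' j, (1 + thetaTerm τ j w) = 0 ↔ ∃ k, 1 + thetaTerm τ k w = 0 := by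
    intro w
    constructor
    · intro h
      by_contra! hne
      exact tprod_one_add_ne_zero_of_summable hne (hsum w) h
    · rintro ⟨k, hk⟩
      rw [hsplit k, hk, zero_mul]
  refine ⟨fun w => ∏' j, (1 + thetaTerm τ j w),
    differentiable_tprod_one_add hu (differentiable_thetaTerm τ)
      (fun r w hw j => norm_thetaTerm_le hw j), fun w => ?_, fun w hw => ?_⟩
  · simp only [hz, one_add_thetaTerm_eq_zero_iff]
    constructor
    · rintro ⟨k, m, rfl⟩
      exact ⟨m, -k, by push_cast; ring⟩
    · rintro ⟨m, n, rfl⟩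
      exact ⟨-n, m, by push_cast; ring⟩
  · obtain ⟨k, hk⟩ := (hz w).mp hw
    have hG : ∏' j, (1 + F k j w) ≠ 0 := by
      refine tprod_one_add_ne_zero_of_summable (fun j => ?_) (hFsum k w)
      by_cases h : j = k
      · simp [F, h]
      · simp only [F, h, if_false]
        intro h0
        obtain ⟨m, hm⟩ := one_add_thetaTerm_eq_zero_iff.mp h0
        obtain ⟨m', hm'⟩ := one_add_thetaTerm_eq_zero_iff.mp hk
        have him := congrArg Complex.im (hm.symm.trans hm')
        simp at him
        rcases him with him | him
        · exact h him
        · exact hτ.ne' him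
    have hd : HasDerivAt (fun w => ∏' j, (1 + thetaTerm τ j w))
        (deriv (thetaTerm τ k) w * ∏' j, (1 + F k j w) +
          (1 + thetaTerm τ k w) * deriv (fun w => ∏' j, (1 + F k j w)) w) w := by
      simp_rw [hsplit k]
      exact ((differentiable_thetaTerm τ k w).hasDerivAt.const_add 1).mul (hFd k w).hasDerivAt
    rw [hd.deriv, hk, zero_mul, add_zero]
    exact mul_ne_zero (deriv_thetaTerm_ne_zero τ k w) hG

/-! ### Interpolation on a lattice -/

lemma Differentiable.dslope_complex {f : ℂ → ℂ} (hf : Differentiable ℂ f) (c : ℂ) :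
    Differentiable ℂ (dslope f c) := by
  rw [← differentiableOn_univ] at hf ⊢
  exact (Complex.differentiableOn_dslope Filter.univ_mem).mpr hf

/-- Mittag-Leffler interpolation on a lattice: entire functions take arbitrary values on it. The
function is `∑ₗ (c l / θ' l) · θ w / (w - l) · ((w - w₀) / (l - w₀)) ^ N l` with exponents `N l`
large enough to force locally uniform convergence. -/
lemma exists_entire_interpolation (L : PeriodPair) {θ : ℂ → ℂ} (hθ : Differentiable ℂ θ)
    (hz : ∀ w ∈ L.lattice, θ w = 0) (hd : ∀ w ∈ L.lattice, deriv θ w ≠ 0)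
    {w₀ : ℂ} (hw₀ : w₀ ∉ L.lattice) (c : ℂ → ℂ) :
    ∃ s : ℂ → ℂ, Differentiable ℂ s ∧ ∀ l ∈ L.lattice, s l = c l := by
  obtain ⟨a, ha, A, hA, -⟩ :=
    NNReal.exists_pos_sum_of_countable (one_ne_zero (α := NNReal)) L.lattice
  have hN : ∀ l : L.lattice, ∃ N : ℕ, ‖c l / deriv θ l‖ * (1 / 2) ^ N ≤ a l := by
    intro l
    have ht : Tendsto (fun N : ℕ => ‖c l / deriv θ l‖ * (1 / 2 : ℝ) ^ N) atTop (𝓝 0) := by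
      simpa using (tendsto_pow_atTop_nhds_zero_of_lt_one (r := (1 / 2 : ℝ))
        (by norm_num) (by norm_num)).const_mul ‖c l / deriv θ l‖
    have hpos : (0 : ℝ) < a l := ha l
    exact (ht.eventually_le_const hpos).exists
  choose N hN using hN
  let f : L.lattice → ℂ → ℂ := fun l w =>
    c l / deriv θ l * dslope θ l w * ((w - w₀) / (l - w₀)) ^ N l
  have hMex : ∀ r : ℝ, ∃ M, ∀ w ∈ Metric.closedBall (0 : ℂ) r, ‖θ w‖ ≤ M := fun r =>
    (isCompact_closedBall 0 r).exists_bound_of_continuousOn hθ.continuous.continuousOn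
  choose M hM using hMex
  have hconv : HasSumLocallyUniformly f (∑' j, f j ·) := by
    refine L.hasSumLocallyUniformly_aux f (fun r l => M r * a l)
      (fun r _ => (NNReal.summable_coe.mpr hA.summable).mul_left _) fun r hr => ?_
    filter_upwards [eventually_ge_atTop (2 * r + 3 * ‖w₀‖ + 1)] with R hR w hw l hl
    have hw0 := norm_nonneg w₀
    have h1 : 1 ≤ ‖w - l‖ := by
      have := norm_sub_norm_le (l : ℂ) w
      rw [norm_sub_rev]; linarith
    have h2 : ‖(w - w₀) / (l - w₀)‖ ≤ 1 / 2 := by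
      have h3 := norm_sub_norm_le (l : ℂ) w₀
      have h4 := norm_sub_le w w₀
      rw [norm_div, div_le_iff₀ (by linarith)]
      linarith
    have hne : w ≠ l := by
      rintro rfl
      simp at h1
      linarith
    have hds : ‖dslope θ l w‖ ≤ M r := by
      rw [dslope_of_ne _ hne, slope_def_field, hz l l.2, sub_zero, norm_div]
      exact (div_le_self (norm_nonneg _) h1).trans (hM r w (by simpa using hw.le))
    calc ‖f l w‖ = ‖dslope θ l w‖ * (‖c l / deriv θ l‖ * ‖(w - w₀) / (l - w₀)‖ ^ N l) := by
          simp only [f, norm_mul, norm_pow]; ring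
      _ ≤ M r * (‖c l / deriv θ l‖ * (1 / 2) ^ N l) := by
          have := (norm_nonneg _).trans hds
          gcongr
      _ ≤ M r * a l := by
          have := (norm_nonneg _).trans hds
          gcongr
          exact hN l
  refine ⟨(∑' j, f j ·), ?_, fun l hl => ?_⟩
  · rw [← differentiableOn_univ]
    refine hconv.hasSumLocallyUniformlyOn.differentiableOn
      (.of_forall fun s => .fun_sum fun i _ => ?_) isOpen_univ
    have := hθ.dslope_complex i
    exact Differentiable.differentiableOn (by fun_prop)
  · beta_reduce
    rw [tsum_eq_single (⟨l, hl⟩ : L.lattice)]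
    · have h0 : l - w₀ ≠ 0 := sub_ne_zero.mpr (by rintro rfl; exact hw₀ hl)
      simp [f, dslope_same, div_self h0, div_mul_cancel₀ _ (hd l hl)]
    · intro j hj
      have hne : l ≠ j := fun h => hj (Subtype.ext h.symm)
      simp [f, dslope_of_ne _ hne, slope_def_field, hz l hl, hz j j.2]

/-- The function is `θ * exp s` with `s` interpolating `log (1 / θ')` on the lattice, corrected to
have the prescribed 1-jet `(z₀, z₁)` at `w₀`. -/
lemma exists_entire_prescribed (L : PeriodPair) {θ : ℂ → ℂ} (hθ : Differentiable ℂ θ)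
    (hz : ∀ w, θ w = 0 ↔ w ∈ L.lattice) (hd : ∀ w ∈ L.lattice, deriv θ w ≠ 0)
    {w₀ : ℂ} (hw₀ : w₀ ∉ L.lattice) {z₀ : ℂ} (hz₀ : z₀ ≠ 0) (z₁ : ℂ) :
    ∃ Z : ℂ → ℂ, Differentiable ℂ Z ∧ (∀ w, Z w = 0 ↔ w ∈ L.lattice) ∧
      (∀ l ∈ L.lattice, deriv Z l = 1) ∧ Z w₀ = z₀ ∧ deriv Z w₀ = z₁ := by
  obtain ⟨s, hs, hsl⟩ := exists_entire_interpolation L hθ (fun w hw => (hz w).mpr hw) hd hw₀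
    (fun l => log (1 / deriv θ l))
  have hθ₀ : θ w₀ ≠ 0 := fun h => hw₀ ((hz w₀).mp h)
  -- Adding `θ w * (A + B (w - w₀))` to the exponent corrects the 1-jet at `w₀` and does not
  -- change the values on the lattice.
  obtain ⟨A, hA⟩ : ∃ A, s w₀ + θ w₀ * A = log (z₀ / θ w₀) :=
    ⟨(log (z₀ / θ w₀) - s w₀) / θ w₀, by field_simp; ring⟩
  obtain ⟨B, hB⟩ : ∃ B, deriv θ w₀ * (z₀ / θ w₀) +
      z₀ * (deriv s w₀ + (deriv θ w₀ * A + θ w₀ * B)) = z₁ :=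
    ⟨((z₁ - deriv θ w₀ * (z₀ / θ w₀)) / z₀ - deriv s w₀ - deriv θ w₀ * A) / θ w₀, by
      field_simp; ring⟩
  have hE : ∀ w, HasDerivAt (fun w => s w + θ w * (A + B * (w - w₀)))
      (deriv s w + (deriv θ w * (A + B * (w - w₀)) + θ w * B)) w := by
    intro w
    have h1 : HasDerivAt (fun w => A + B * (w - w₀)) B w := by
      simpa using (((hasDerivAt_id w).sub_const w₀).const_mul B).const_add A
    exact (hs w).hasDerivAt.add ((hθ w).hasDerivAt.mul h1)
  have hZ : ∀ w, HasDerivAt (fun w => θ w * exp (s w + θ w * (A + B * (w - w₀)))) _ w :=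
    fun w => (hθ w).hasDerivAt.mul (hE w).cexp
  have hZ₀ : exp (s w₀ + θ w₀ * (A + B * (w₀ - w₀))) = z₀ / θ w₀ := by
    rw [sub_self, mul_zero, add_zero, hA, exp_log (div_ne_zero hz₀ hθ₀)]
  refine ⟨_, fun w => (hZ w).differentiableAt, fun w => ?_, fun l hl => ?_, ?_, ?_⟩
  · simp [exp_ne_zero, hz]
  · rw [(hZ l).deriv, (hz l).mpr hl, hsl l hl]
    simp only [zero_mul, add_zero]
    rw [exp_log (one_div_ne_zero (hd l hl)), mul_one_div_cancel (hd l hl)]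
  · simp only [hZ₀]
    field_simp
  · rw [(hZ w₀).deriv, hZ₀, ← hB]
    field_simp
    ring

/-! ### The Weierstrass function -/

section General

variable (L : PeriodPair)

lemma PeriodPair.isPreconnected_compl_lattice : IsPreconnected (L.lattice : Set ℂ)ᶜ := by
  have hc : (L.lattice : Set ℂ).Countable := Set.countable_coe_iff.mp
    (inferInstanceAs (Countable L.lattice))
  refine (hc.isPathConnected_compl_of_one_lt_rank ?_).isConnected.isPreconnected
  rw [Complex.rank_real_complex]
  norm_num

lemma PeriodPair.eventually_notMem_or_eq (l : ℂ) : ∀ᶠ w in 𝓝 l, w ∈ L.lattice → w = l := by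
  filter_upwards [L.compl_lattice_sdiff_singleton_mem_nhds l] with w hw hwL
  by_contra h
  exact hw ⟨hwL, h⟩

/-- If `℘` omitted `u`, then `1 / (℘ - u)` would be a nonconstant bounded entire function. -/
lemma PeriodPair.exists_weierstrassP_eq (u : ℂ) : ∃ w ∉ L.lattice, L.weierstrassP w = u := by
  classical
  by_contra! hne
  let f : ℂ → ℂ := fun w => if w ∈ L.lattice then 0 else 1 / (L.weierstrassP w - u)
  have hf : Differentiable ℂ f := by
    intro x
    by_cases hx : x ∈ L.lattice
    · have hA := L.analyticAt_weierstrassPExcept x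
      have hg : AnalyticAt ℂ (fun w => (w - x) ^ 2 /
          (1 + (w - x) ^ 2 * (L.weierstrassPExcept x w - 1 / x ^ 2 - u))) x := by
        refine AnalyticAt.div (by fun_prop) (by fun_prop) (by simp)
      refine (hg.congr ?_).differentiableAt
      filter_upwards [L.eventually_notMem_or_eq x] with w hw
      by_cases hwx : w = x
      · simp [hwx, f, hx]
      · have hwL : w ∉ L.lattice := fun h => hwx (hw h)
        have h0 : w - x ≠ 0 := sub_ne_zero.mpr hwx
        have h1 := hne w hwL
        simp only [f, hwL, if_false]
        have h2 := L.weierstrassPExcept_add ⟨x, hx⟩ w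
        simp only at h2
        have h3 : 1 + (w - x) ^ 2 * (L.weierstrassPExcept x w - 1 / x ^ 2 - u) =
            (w - x) ^ 2 * (L.weierstrassP w - u) := by
          rw [← h2]
          field_simp [-one_div]
          ring
        have h4 : L.weierstrassP w - u ≠ 0 := sub_ne_zero.mpr h1
        rw [h3]
        field_simp
    · have h1 : AnalyticAt ℂ (fun w => 1 / (L.weierstrassP w - u)) x := by
        have := L.analyticOnNhd_weierstrassP x hx
        exact AnalyticAt.div (by fun_prop) (by fun_prop) (sub_ne_zero.mpr (hne x hx))
      refine (h1.congr ?_).differentiableAt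
      filter_upwards [L.isClosed_lattice.isOpen_compl.mem_nhds hx] with w hw
      have hw' : w ∉ L.lattice := hw
      simp [f, hw']
  have hper : ∀ z w, w ∈ L.lattice → f (z + w) = f z := by
    intro z w hw
    have h1 : z + w ∈ L.lattice ↔ z ∈ L.lattice := L.lattice.add_mem_iff_left hw
    have h2 := L.weierstrassP_add_coe z ⟨w, hw⟩
    simp only at h2
    simp only [f, h1, h2]
  have hconst := hf.apply_eq_apply_of_bounded
    (IsZLattice.isCompact_range_of_periodic L.lattice f hf.continuous hper).isBounded
    (L.ω₁ / 2) 0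
  have h0 : (0 : ℂ) ∈ L.lattice := L.lattice.zero_mem
  simp only [f, L.ω₁_div_two_notMem_lattice, h0, if_true, if_false] at hconst
  exact one_div_ne_zero (sub_ne_zero.mpr (hne _ L.ω₁_div_two_notMem_lattice)) hconst

lemma PeriodPair.exists_weierstrassP_eq_and {u v : ℂ}
    (h : v ^ 2 = 4 * u ^ 3 - L.g₂ * u - L.g₃) :
    ∃ w ∉ L.lattice, L.weierstrassP w = u ∧ L.derivWeierstrassP w = v := by
  obtain ⟨w, hw, hu⟩ := L.exists_weierstrassP_eq u
  have h1 := L.derivWeierstrassP_sq w hw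
  rw [hu, ← h, sq_eq_sq_iff_eq_or_eq_neg] at h1
  rcases h1 with h1 | h1
  · exact ⟨w, hw, hu, h1⟩
  · exact ⟨-w, by simpa using hw, by rw [L.weierstrassP_neg, hu],
      by rw [L.derivWeierstrassP_neg, h1, neg_neg]⟩

lemma PeriodPair.hasDerivAt_weierstrassP {w : ℂ} (hw : w ∉ L.lattice) :
    HasDerivAt L.weierstrassP (L.derivWeierstrassP w) w := by
  rw [← L.deriv_weierstrassP]
  exact (L.analyticOnNhd_weierstrassP w hw).differentiableAt.hasDerivAt

/-- Off the zeros of `℘'` this is the derivative of the equation for `℘'²` divided by `2 ℘'`;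
those zeros are isolated, so it extends to them by continuity. -/
lemma PeriodPair.hasDerivAt_derivWeierstrassP (hg : L.g₂ = 0) {w : ℂ} (hw : w ∉ L.lattice) :
    HasDerivAt L.derivWeierstrassP (6 * L.weierstrassP w ^ 2) w := by
  have hopen := L.isClosed_lattice.isOpen_compl
  have hA' := L.analyticOnNhd_derivWeierstrassP
  have hA := L.analyticOnNhd_weierstrassP
  have hprod : ∀ z ∉ L.lattice, L.derivWeierstrassP z ≠ 0 →
      deriv L.derivWeierstrassP z - 6 * L.weierstrassP z ^ 2 = 0 := by
    intro z hz hne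
    have h1 := (hA' z hz).differentiableAt.hasDerivAt.fun_pow 2
    have h2 : HasDerivAt (fun z => 4 * L.weierstrassP z ^ 3 - L.g₃) _ z :=
      (((L.hasDerivAt_weierstrassP hz).fun_pow 3).const_mul 4).sub_const L.g₃
    have h3 : (fun z => L.derivWeierstrassP z ^ 2) =ᶠ[𝓝 z]
        fun z => 4 * L.weierstrassP z ^ 3 - L.g₃ := by
      filter_upwards [hopen.mem_nhds hz] with y hy
      rw [L.derivWeierstrassP_sq y hy, hg]
      ring
    have h4 := h1.unique (h2.congr_of_eventuallyEq h3)
    norm_num at h4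
    apply mul_left_cancel₀ hne
    linear_combination h4 / 2
  suffices deriv L.derivWeierstrassP w - 6 * L.weierstrassP w ^ 2 = 0 by
    rw [← sub_eq_zero.mp this]
    exact (hA' w hw).differentiableAt.hasDerivAt
  rcases (hA' w hw).eventually_eq_zero_or_eventually_ne_zero with h0 | h0
  · exfalso
    have hzero := hA'.eqOn_zero_of_preconnected_of_eventuallyEq_zero
      L.isPreconnected_compl_lattice hw h0
    have hall : ∀ u : ℂ, 4 * u ^ 3 = L.g₃ := by
      intro u
      obtain ⟨z, hz, rfl⟩ := L.exists_weierstrassP_eq u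
      have h1 := L.derivWeierstrassP_sq z hz
      have h2 : L.derivWeierstrassP z = 0 := hzero hz
      rw [h2, hg] at h1
      linear_combination -h1
    have h1 := (hall 0).trans (hall 1).symm
    norm_num at h1
  · have hcont : ContinuousAt
        (fun z => deriv L.derivWeierstrassP z - 6 * L.weierstrassP z ^ 2) w := by
      have h1 := (hA' w hw).deriv.continuousAt
      have h2 := (hA w hw).continuousAt
      fun_prop
    refine tendsto_nhds_unique (l := 𝓝[≠] w) (hcont.tendsto.mono_left nhdsWithin_le_nhds)
      (tendsto_const_nhds.congr' ?_)
    filter_upwards [h0, mem_nhdsWithin_of_mem_nhds (hopen.mem_nhds hw)] with z hz hzL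
    exact (hprod z hzL hz).symm

/-- If both invariants vanished, then `℘'² = 4 ℘³`; at a zero of `℘` of order `n` this would give
`2 (n - 1) = 3 n`. -/
lemma PeriodPair.g₃_ne_zero (hg : L.g₂ = 0) : L.g₃ ≠ 0 := by
  intro hg3
  obtain ⟨w, hw, hw0⟩ := L.exists_weierstrassP_eq 0
  have hA := L.analyticOnNhd_weierstrassP
  have hA' := L.analyticOnNhd_derivWeierstrassP w hw
  have hord := (hA w hw).analyticOrderAt_deriv_add_one
  simp only [hw0, sub_zero, L.deriv_weierstrassP] at hord
  have heq : (L.derivWeierstrassP ^ 2) =ᶠ[𝓝 w] ((fun _ => (4 : ℂ)) * L.weierstrassP ^ 3) := by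
    filter_upwards [L.isClosed_lattice.isOpen_compl.mem_nhds hw] with y hy
    simp [L.derivWeierstrassP_sq y hy, hg, hg3]
  have h1 := analyticOrderAt_congr heq
  have hA3 : AnalyticAt ℂ (L.weierstrassP ^ 3) w := (hA w hw).pow 3
  rw [analyticOrderAt_pow hA', analyticOrderAt_mul analyticAt_const hA3,
    analyticOrderAt_pow (hA w hw),
    (analyticAt_const (v := (4 : ℂ)) (x := w)).analyticOrderAt_eq_zero.mpr (by norm_num)] at h1
  have hne : analyticOrderAt L.weierstrassP w ≠ ⊤ := by
    intro htop
    have hzero := hA.eqOn_zero_of_preconnected_of_eventuallyEq_zero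
      L.isPreconnected_compl_lattice hw (analyticOrderAt_eq_top.mp htop)
    obtain ⟨z, hz, hz1⟩ := L.exists_weierstrassP_eq 1
    have h2 : L.weierstrassP z = 0 := hzero hz
    rw [hz1] at h2
    exact one_ne_zero h2
  have hne' : analyticOrderAt L.derivWeierstrassP w ≠ ⊤ := by
    intro htop
    rw [htop] at hord
    exact hne (by simpa using hord.symm)
  lift analyticOrderAt L.weierstrassP w to ℕ using hne with n
  lift analyticOrderAt L.derivWeierstrassP w to ℕ using hne' with m
  have h2 : m + 1 = n := by exact_mod_cast hord
  have h3 : 2 * m = 3 * n := by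
    simp only [zero_add, nsmul_eq_mul] at h1
    exact_mod_cast h1
  omega

end General

/-! ### The hexagonal lattice -/

/-- The primitive cube root of unity `(-1 + √3 i) / 2`. -/
noncomputable def cubeRoot : ℂ := ⟨-1 / 2, Real.sqrt 3 / 2⟩

lemma cubeRoot_im_pos : 0 < cubeRoot.im := by
  change 0 < Real.sqrt 3 / 2
  positivity

lemma cubeRoot_sq : cubeRoot ^ 2 = -1 - cubeRoot := by
  have h : Real.sqrt 3 * Real.sqrt 3 = 3 := Real.mul_self_sqrt (by norm_num)
  apply Complex.ext
  · simp [cubeRoot, sq]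
    linarith
  · simp [cubeRoot, sq]
    ring

/-- The hexagonal period lattice `ℤ + ℤ ω`, with `ω` the primitive cube root of unity. -/
noncomputable def hexPair : PeriodPair where
  ω₁ := 1
  ω₂ := cubeRoot
  indep := by
    rw [LinearIndependent.pair_iff]
    intro s t h
    have him := congrArg Complex.im h
    have ht : t = 0 := by
      simpa [cubeRoot_im_pos.ne'] using him
    subst ht
    exact ⟨by simpa using h, rfl⟩

lemma mem_hexPair_lattice {w : ℂ} :
    w ∈ hexPair.lattice ↔ ∃ m n : ℤ, w = m + n * cubeRoot := by
  rw [PeriodPair.mem_lattice]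
  simp only [hexPair, mul_one, eq_comm]

lemma cubeRoot_mul_mem {w : ℂ} (hw : w ∈ hexPair.lattice) : cubeRoot * w ∈ hexPair.lattice := by
  obtain ⟨m, n, rfl⟩ := mem_hexPair_lattice.mp hw
  refine mem_hexPair_lattice.mpr ⟨-n, m - n, ?_⟩
  push_cast
  linear_combination (n : ℂ) * cubeRoot_sq

lemma cubeRoot_pow_three : cubeRoot ^ 3 = 1 := by
  linear_combination (cubeRoot - 1) * cubeRoot_sq

/-- Multiplication by the cube root of unity permutes the lattice, so `G₄ = ω⁻⁴ G₄`. -/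
lemma hexPair_g₂ : hexPair.g₂ = 0 := by
  let e : hexPair.lattice ≃ hexPair.lattice :=
    { toFun := fun l => ⟨cubeRoot * l, cubeRoot_mul_mem l.2⟩
      invFun := fun l => ⟨cubeRoot * (cubeRoot * l), cubeRoot_mul_mem (cubeRoot_mul_mem l.2)⟩
      left_inv := fun l => Subtype.ext (by
        change cubeRoot * (cubeRoot * (cubeRoot * (l : ℂ))) = l
        linear_combination (l : ℂ) * cubeRoot_pow_three)
      right_inv := fun l => Subtype.ext (by
        change cubeRoot * (cubeRoot * (cubeRoot * (l : ℂ))) = l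
        linear_combination (l : ℂ) * cubeRoot_pow_three) }
  have h4 : cubeRoot ^ 4 = cubeRoot := by
    linear_combination cubeRoot * cubeRoot_pow_three
  have h : hexPair.G 4 = cubeRoot⁻¹ * hexPair.G 4 := by
    conv_lhs => rw [PeriodPair.G, ← e.tsum_eq]
    rw [PeriodPair.G, ← tsum_mul_left]
    refine tsum_congr fun l => ?_
    change ((cubeRoot * (l : ℂ)) ^ 4)⁻¹ = _
    rw [mul_pow, h4, mul_inv]
  have hne1 : cubeRoot⁻¹ ≠ 1 := by
    intro h1
    have h2 := congrArg Complex.im (inv_eq_one.mp h1)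
    exact cubeRoot_im_pos.ne' (by simpa using h2)
  have hG : hexPair.G 4 = 0 := by
    have h1 : (1 - cubeRoot⁻¹) * hexPair.G 4 = 0 := by linear_combination h
    exact (mul_eq_zero.mp h1).resolve_left (sub_ne_zero.mpr hne1.symm)
  rw [PeriodPair.g₂, hG, mul_zero]

/-! ### Removing the poles -/

/-- Multiplying `(℘, -℘'/2)` by the weights `Z², Z³` removes the poles when `Z` has simple zeros
with derivative `1` on the lattice, and the extended functions take the value `1` there. -/
lemma exists_entire_extension (L : PeriodPair) {Z : ℂ → ℂ} (hZ : Differentiable ℂ Z)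
    (hZ0 : ∀ w ∈ L.lattice, Z w = 0) (hZ1 : ∀ l ∈ L.lattice, deriv Z l = 1) :
    ∃ X Y : ℂ → ℂ, Differentiable ℂ X ∧ Differentiable ℂ Y ∧
      (∀ w ∈ L.lattice, X w = 1 ∧ Y w = 1) ∧
      ∀ w ∉ L.lattice, X w = L.weierstrassP w * Z w ^ 2 ∧
        Y w = -(1 / 2) * L.derivWeierstrassP w * Z w ^ 3 := by
  classical
  have hZD : ∀ x ∈ L.lattice, ∀ w, Z w = (w - x) * dslope Z x w := by
    intro x hx w
    have h := sub_smul_dslope Z x w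
    rw [hZ0 x hx, sub_zero, smul_eq_mul] at h
    exact h.symm
  have hD : ∀ x, AnalyticAt ℂ (dslope Z x) x := fun x => (hZ.dslope_complex x).analyticAt x
  have hZA : ∀ x, AnalyticAt ℂ Z x := hZ.analyticAt
  refine ⟨fun w => if w ∈ L.lattice then 1 else L.weierstrassP w * Z w ^ 2,
    fun w => if w ∈ L.lattice then 1 else -(1 / 2) * L.derivWeierstrassP w * Z w ^ 3,
    fun x => ?_, fun x => ?_, fun w hw => by simp [hw], fun w hw => by simp [hw]⟩
  · have hDx := hD x
    have hZx := hZA x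
    by_cases hx : x ∈ L.lattice
    · have hE := L.analyticAt_weierstrassPExcept x
      have hg : AnalyticAt ℂ (fun w => dslope Z x w ^ 2 *
          (1 + (w - x) ^ 2 * (L.weierstrassPExcept x w - 1 / x ^ 2))) x := by fun_prop
      refine (hg.congr ?_).differentiableAt
      filter_upwards [L.eventually_notMem_or_eq x] with w hw
      by_cases hwx : w = x
      · simp [hwx, hx, hZ1 x hx]
      · have h0 : w - x ≠ 0 := sub_ne_zero.mpr hwx
        have h2 := L.weierstrassPExcept_add ⟨x, hx⟩ w
        simp only at h2
        rw [if_neg (fun h => hwx (hw h)), ← h2, hZD x hx w]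
        field_simp [-one_div]
        ring
    · have h1 := L.analyticOnNhd_weierstrassP x hx
      have hg : AnalyticAt ℂ (fun w => L.weierstrassP w * Z w ^ 2) x := by
        fun_prop
      refine (hg.congr ?_).differentiableAt
      filter_upwards [L.isClosed_lattice.isOpen_compl.mem_nhds hx] with w hw
      exact (if_neg hw).symm
  · have hDx := hD x
    have hZx := hZA x
    by_cases hx : x ∈ L.lattice
    · have hE := L.analyticAt_derivWeierstrassPExcept x
      have hg : AnalyticAt ℂ (fun w => dslope Z x w ^ 3 *
          (1 - 1 / 2 * (w - x) ^ 3 * L.derivWeierstrassPExcept x w)) x := by fun_prop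
      refine (hg.congr ?_).differentiableAt
      filter_upwards [L.eventually_notMem_or_eq x] with w hw
      by_cases hwx : w = x
      · simp [hwx, hx, hZ1 x hx]
      · have h0 : w - x ≠ 0 := sub_ne_zero.mpr hwx
        have h2 := L.derivWeierstrassPExcept_sub ⟨x, hx⟩ w
        simp only at h2
        rw [if_neg (fun h => hwx (hw h)), ← h2, hZD x hx w]
        field_simp
        ring
    · have h1 := L.analyticOnNhd_derivWeierstrassP x hx
      have hg : AnalyticAt ℂ (fun w => -(1 / 2) * L.derivWeierstrassP w * Z w ^ 3) x := by
        fun_prop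
      refine (hg.congr ?_).differentiableAt
      filter_upwards [L.isClosed_lattice.isOpen_compl.mem_nhds hx] with w hw
      exact (if_neg hw).symm

/-! ### The entire curve -/

lemma iteratedDeriv_const_mul_pow_eq_zero {f : ℂ → ℂ} (hf : Differentiable ℂ f) (c : ℂ) {x : ℂ}
    (hx : f x = 0) {n j : ℕ} (hj : j < n) : iteratedDeriv j (fun ξ => c * f ξ ^ n) x = 0 := by
  have hA : AnalyticAt ℂ f x := hf.analyticAt x
  have hP : AnalyticAt ℂ (fun ξ => c * f ξ ^ n) x := by fun_prop
  refine (natCast_le_analyticOrderAt_iff_iteratedDeriv_eq_zero hP).mp ?_ j hj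
  have h1 : 1 ≤ analyticOrderAt f x :=
    Order.one_le_iff_pos.mpr (pos_iff_ne_zero.mpr (hA.analyticOrderAt_ne_zero.mpr hx))
  change (n : ℕ∞) ≤ analyticOrderAt ((fun _ => c) * f ^ n) x
  rw [analyticOrderAt_mul analyticAt_const (hA.pow n), analyticOrderAt_pow hA, nsmul_eq_mul]
  calc (n : ℕ∞) = n * 1 := (mul_one _).symm
    _ ≤ n * analyticOrderAt f x := by gcongr
    _ ≤ _ := le_add_self

/-- In the coordinates `(w, z)` the cubic pulls back to `z = 0`, and the map
`(w, z) ↦ (℘ w * z², -℘' w * z³ / 2)` has Jacobian determinant `3 g₃ z⁴ / 2`; so every 1-jet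
`(p, ν)` with `p` off the cubic lifts to a 1-jet `((w, z), (a, b))`. -/
lemma exists_lift_jet (L : PeriodPair) (hg : L.g₂ = 0) {x y : ℂ} (hxy : x ^ 3 ≠ y ^ 2)
    (s t : ℂ) :
    ∃ w ∉ L.lattice, ∃ z a b : ℂ, z ≠ 0 ∧
      L.weierstrassP w * z ^ 2 = x ∧ -(1 / 2) * L.derivWeierstrassP w * z ^ 3 = y ∧
      a * (L.derivWeierstrassP w * z ^ 2) + b * (2 * L.weierstrassP w * z) = s ∧
      a * (-3 * L.weierstrassP w ^ 2 * z ^ 3) +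
        b * (-(3 / 2) * L.derivWeierstrassP w * z ^ 2) = t := by
  have hg3 := L.g₃_ne_zero hg
  obtain ⟨z, hz⟩ := IsAlgClosed.exists_pow_nat_eq ((x ^ 3 - y ^ 2) * 4 / L.g₃)
    (n := 6) (by norm_num)
  have hz6 : L.g₃ * z ^ 6 = 4 * (x ^ 3 - y ^ 2) := by
    rw [hz]
    field_simp
  have hz0 : z ≠ 0 := by
    rintro rfl
    apply hxy
    linear_combination -(1 / 4) * hz6
  obtain ⟨w, hw, hu, hv⟩ := L.exists_weierstrassP_eq_and (u := x / z ^ 2) (v := -2 * y / z ^ 3) (by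
    rw [hg]
    field_simp
    linear_combination hz6)
  refine ⟨w, hw, z,
    (s * (-(3 / 2) * L.derivWeierstrassP w * z ^ 2) - t * (2 * L.weierstrassP w * z)) /
      (3 / 2 * L.g₃ * z ^ 4),
    (t * (L.derivWeierstrassP w * z ^ 2) - s * (-3 * L.weierstrassP w ^ 2 * z ^ 3)) /
      (3 / 2 * L.g₃ * z ^ 4), hz0, ?_, ?_, ?_, ?_⟩
  · rw [hu]
    field_simp
  · rw [hv]
    field_simp
  all_goals
    have hsq := L.derivWeierstrassP_sq w hw
    rw [hg] at hsq
    field_simp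
  · linear_combination (-3 * s * z) * hsq
  · linear_combination (-t) * hsq

/-- Theorem 4.1 (kob.t1) combined with Proposition 4.10 (kob.p3): through every point of
`ℂ² \ L₀` and every tangent vector there is an entire curve `h = (h₁, h₂)` meeting the
cuspidal cubic `L₀` only at `(1, 1)`, and at every such meeting point the function
`h₁³ − h₂²` vanishes to order at least 6. -/
theorem stmt_9 (p : ℂ × ℂ) (hp : p ∉ cuspidalCubic) (ν : ℂ × ℂ) :
    ∃ h₁ h₂ : ℂ → ℂ, Differentiable ℂ h₁ ∧ Differentiable ℂ h₂ ∧
      (h₁ 0, h₂ 0) = p ∧ (deriv h₁ 0, deriv h₂ 0) = ν ∧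
      (∀ ξ : ℂ, (h₁ ξ, h₂ ξ) ∈ cuspidalCubicᶜ ∪ {((1 : ℂ), (1 : ℂ))}) ∧
      (∀ ξ₀ : ℂ, (h₁ ξ₀, h₂ ξ₀) = ((1 : ℂ), (1 : ℂ)) →
        ∀ j : ℕ, j ≤ 5 →
          iteratedDeriv j (fun ξ => h₁ ξ ^ 3 - h₂ ξ ^ 2) ξ₀ = 0) := by
  obtain ⟨x, y⟩ := p
  obtain ⟨s, t⟩ := ν
  have hg := hexPair_g₂
  have hg3 := hexPair.g₃_ne_zero hg
  have hxy : x ^ 3 ≠ y ^ 2 := hp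
  obtain ⟨w₀, hw₀, z₀, a, b, hz₀, hx, hy, hs, ht⟩ := exists_lift_jet hexPair hg hxy s t
  by_cases ha : a = 0
  · -- A vertical tangent vector: the weighted dilations of the fixed point `(x, y)` suffice.
    subst ha
    have hne : ∀ ξ, (x * exp (2 * (b / z₀ * ξ))) ^ 3 ≠ (y * exp (3 * (b / z₀ * ξ))) ^ 2 := by
      intro ξ h
      rw [mul_pow, mul_pow, ← exp_nat_mul, ← exp_nat_mul] at h
      have he : ((3 : ℕ) : ℂ) * (2 * (b / z₀ * ξ)) = ((2 : ℕ) : ℂ) * (3 * (b / z₀ * ξ)) := by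
        push_cast
        ring
      rw [he] at h
      exact hxy (mul_right_cancel₀ (exp_ne_zero _) h)
    have hd : ∀ c d : ℂ, HasDerivAt (fun ξ : ℂ => c * exp (d * (b / z₀ * ξ)))
        (c * (d * (b / z₀))) 0 := by
      intro c d
      simpa using ((((hasDerivAt_id (0 : ℂ)).const_mul (b / z₀)).const_mul d).cexp).const_mul c
    refine ⟨fun ξ => x * exp (2 * (b / z₀ * ξ)), fun ξ => y * exp (3 * (b / z₀ * ξ)),
      by fun_prop, by fun_prop, by simp, ?_, fun ξ => Or.inl (hne ξ), fun ξ₀ h => ?_⟩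
    · rw [(hd x 2).deriv, (hd y 3).deriv, ← hs, ← ht, ← hx, ← hy]
      refine Prod.ext ?_ ?_
      · field_simp
        ring
      · field_simp
        ring
    · obtain ⟨h1, h2⟩ := Prod.mk.inj h
      refine absurd ?_ (hne ξ₀)
      simp only at h1 h2
      rw [h1, h2]
      norm_num
  · obtain ⟨θ, hθ, hθz, hθd⟩ := exists_entire_simple_zeros cubeRoot_im_pos
    simp only [← mem_hexPair_lattice] at hθz
    obtain ⟨Z, hZ, hZz, hZd, hZ₀, hZ₁⟩ := exists_entire_prescribed hexPair hθ hθz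
      (fun w hw => hθd w ((hθz w).mpr hw)) hw₀ hz₀ (b / a)
    obtain ⟨X, Y, hX, hY, hL, hXY⟩ := exists_entire_extension hexPair hZ
      (fun w hw => (hZz w).mpr hw) hZd
    have hkey : ∀ w, X w ^ 3 - Y w ^ 2 = hexPair.g₃ / 4 * Z w ^ 6 := by
      intro w
      by_cases hw : w ∈ hexPair.lattice
      · rw [(hL w hw).1, (hL w hw).2, (hZz w).mpr hw]
        norm_num
      · have hsq := hexPair.derivWeierstrassP_sq w hw
        rw [hg] at hsq
        rw [(hXY w hw).1, (hXY w hw).2]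
        linear_combination -(1 / 4) * Z w ^ 6 * hsq
    have hnhds := hexPair.isClosed_lattice.isOpen_compl.mem_nhds hw₀
    have hZ' : HasDerivAt Z (b / a) w₀ := hZ₁ ▸ (hZ w₀).hasDerivAt
    have hX' : HasDerivAt X (s / a) w₀ := by
      have h := (hexPair.hasDerivAt_weierstrassP hw₀).fun_mul (hZ'.fun_pow 2)
      refine (h.congr_of_eventuallyEq (f₁ := X) ?_).congr_deriv ?_
      · filter_upwards [hnhds] with w hw using (hXY w hw).1
      · rw [hZ₀, ← hs]
        push_cast
        field_simp
    have hY' : HasDerivAt Y (t / a) w₀ := by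
      have h := ((hexPair.hasDerivAt_derivWeierstrassP hg hw₀).const_mul (-(1 / 2))).fun_mul
        (hZ'.fun_pow 3)
      refine (h.congr_of_eventuallyEq (f₁ := Y) ?_).congr_deriv ?_
      · filter_upwards [hnhds] with w hw using (hXY w hw).2
      · rw [hZ₀, ← ht]
        push_cast
        field_simp
        ring
    have hlin : HasDerivAt (fun ξ : ℂ => w₀ + a * ξ) a 0 := by
      simpa using ((hasDerivAt_id (0 : ℂ)).const_mul a).const_add w₀
    have hpt : w₀ = w₀ + a * 0 := by simp
    refine ⟨fun ξ => X (w₀ + a * ξ), fun ξ => Y (w₀ + a * ξ), by fun_prop, by fun_prop,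
      ?_, ?_, fun ξ => ?_, fun ξ₀ h j hj => ?_⟩
    · simp only [← hpt]
      rw [(hXY w₀ hw₀).1, (hXY w₀ hw₀).2, hZ₀, hx, hy]
    · have h1 := HasDerivAt.comp_of_eq (0 : ℂ) hX' hlin hpt
      have h2 := HasDerivAt.comp_of_eq (0 : ℂ) hY' hlin hpt
      rw [div_mul_cancel₀ _ ha] at h1 h2
      exact Prod.ext h1.deriv h2.deriv
    · by_cases hw : w₀ + a * ξ ∈ hexPair.lattice
      · right
        simp [(hL _ hw).1, (hL _ hw).2]
      · left
        intro hmem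
        have h1 : X (w₀ + a * ξ) ^ 3 = Y (w₀ + a * ξ) ^ 2 := hmem
        have h2 := hkey (w₀ + a * ξ)
        rw [h1, sub_self] at h2
        have hZne : Z (w₀ + a * ξ) ≠ 0 := fun h => hw ((hZz _).mp h)
        exact mul_ne_zero (div_ne_zero hg3 (by norm_num)) (pow_ne_zero 6 hZne) h2.symm
    · obtain ⟨h1, h2⟩ := Prod.mk.inj h
      have hZ0 : Z (w₀ + a * ξ₀) = 0 := by
        have h3 := hkey (w₀ + a * ξ₀)
        simp only at h1 h2
        rw [h1, h2] at h3
        have h4 : Z (w₀ + a * ξ₀) ^ 6 = 0 := by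
          have h5 : hexPair.g₃ * Z (w₀ + a * ξ₀) ^ 6 = 0 := by linear_combination -4 * h3
          exact (mul_eq_zero.mp h5).resolve_left hg3
        exact pow_eq_zero_iff (by norm_num) |>.mp h4
      simp only [hkey]
      exact iteratedDeriv_const_mul_pow_eq_zero (f := fun ξ => Z (w₀ + a * ξ)) (by fun_prop) _
        hZ0 (by omega)
end

section
/- Let L₀ = {(x, y) ∈ ℂ² : x³ = y²}. There exists a holomorphic map F : ℂ² → ℂ² such that: (i) for every p ∈ ℂ², F(p) ∈ (ℂ² \ L₀) ∪ {(1, 1)}; (ii) the image of F is dense in ℂ² (in the standard topology); and (iii) the Jacobian determinant of F is not identically zero, i.e. there exists a point p ∈ ℂ² at which the complex derivative (fderiv) of F has nonzero determinant. -/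
namespace RamanujamDominating

/-- The logarithm of the scaling factor: `g(z, w) = iπ(1 - z)/2 + (1 - z²) w`. -/
noncomputable def logScale (p : ℂ × ℂ) : ℂ :=
  Real.pi * Complex.I / 2 * (1 - p.1) + (1 - p.1 ^ 2) * p.2

/-- The dominating map `(z, w) ↦ t • (1, z) = (t², t³ z)` with `t = exp (logScale (z, w))`. -/
noncomputable def dominatingMap (p : ℂ × ℂ) : ℂ × ℂ :=
  (Complex.exp (logScale p) ^ 2, Complex.exp (logScale p) ^ 3 * p.1)

lemma differentiable_dominatingMap : Differentiable ℂ dominatingMap := by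
  unfold dominatingMap logScale
  fun_prop

lemma dominatingMap_mem (p : ℂ × ℂ) :
    dominatingMap p ∈ cuspidalCubicᶜ ∪ {((1 : ℂ), (1 : ℂ))} := by
  obtain ⟨z, w⟩ := p
  by_cases hz : z ^ 2 = 1
  · right
    rcases sq_eq_one_iff.mp hz with rfl | rfl
    · simp [dominatingMap, logScale]
    · have h : logScale (-1, w) = Real.pi * Complex.I := by
        simp only [logScale]; ring
      simp only [dominatingMap, h, Complex.exp_pi_mul_I, Set.mem_singleton_iff]
      norm_num
  · left
    intro h
    apply hz
    simp only [cuspidalCubic, dominatingMap, Set.mem_ofPred_eq] at h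
    have ht := Complex.exp_ne_zero (logScale (z, w))
    apply mul_left_cancel₀ (pow_ne_zero 6 ht)
    linear_combination -h

lemma mem_range_dominatingMap {x y : ℂ} (hx : x ≠ 0) (h : y ^ 2 ≠ x ^ 3) :
    (x, y) ∈ Set.range dominatingMap := by
  -- Solve for `t` as a square root of `x`, then for `z = y / t³`, then for `w`.
  obtain ⟨t, rfl⟩ : ∃ t : ℂ, t ^ 2 = x := IsAlgClosed.exists_pow_nat_eq x two_pos
  have ht : t ≠ 0 := by rintro rfl; simp at hx
  set z := y / t ^ 3 with hz
  have hy : y = t ^ 3 * z := by rw [hz]; field_simp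
  have hz1 : 1 - z ^ 2 ≠ 0 := by
    intro h0
    apply h
    rw [hy]
    linear_combination -t ^ 6 * h0
  refine ⟨(z, (Complex.log t - Real.pi * Complex.I / 2 * (1 - z)) / (1 - z ^ 2)), ?_⟩
  have hg : logScale (z, (Complex.log t - Real.pi * Complex.I / 2 * (1 - z)) / (1 - z ^ 2))
      = Complex.log t := by
    simp only [logScale]
    rw [mul_div_cancel₀ _ hz1]
    ring
  simp only [dominatingMap, hg, Complex.exp_log ht, ← hy]

lemma dense_range_dominatingMap : Dense (Set.range dominatingMap) := by
  -- Each vertical line `x ≠ 0` meets the cubic in finitely many points.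
  have key : ∀ x : ℂ, x ≠ 0 → ∀ y : ℂ, (x, y) ∈ closure (Set.range dominatingMap) := by
    intro x hx y
    obtain ⟨s, hs⟩ : ∃ s : ℂ, s ^ 2 = x ^ 3 := IsAlgClosed.exists_pow_nat_eq _ two_pos
    have hd : Dense ({s, -s} : Set ℂ)ᶜ := (Set.toFinite ({s, -s} : Set ℂ)).countable.dense_compl ℂ
    have hsub : ({x} : Set ℂ) ×ˢ ({s, -s} : Set ℂ)ᶜ ⊆ Set.range dominatingMap := by
      rintro ⟨a, b⟩ ⟨ha, hb⟩
      obtain rfl : a = x := ha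
      refine mem_range_dominatingMap hx fun h => hb ?_
      rw [← hs] at h
      exact sq_eq_sq_iff_eq_or_eq_neg.mp h
    apply closure_mono hsub
    rw [closure_prod_eq]
    exact ⟨subset_closure rfl, hd y⟩
  have h2 : Dense (({0} : Set ℂ)ᶜ ×ˢ (Set.univ : Set ℂ)) :=
    (dense_compl_singleton 0).prod dense_univ
  exact dense_closure.mp (h2.mono fun p hp => key p.1 hp.1 p.2)

/-- At the origin `t = i`, so the derivative sends `(dz, dw)` to `(2i dt, -i dz)` with
`dt = i (-(iπ/2) dz + dw)`, which is injective. -/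
lemma det_fderiv_dominatingMap_ne_zero : (fderiv ℂ dominatingMap (0, 0)).det ≠ 0 := by
  have h1 : HasFDerivAt (fun p : ℂ × ℂ => p.1) (ContinuousLinearMap.fst ℂ ℂ ℂ) (0, 0) :=
    hasFDerivAt_fst
  have h2 : HasFDerivAt (fun p : ℂ × ℂ => p.2) (ContinuousLinearMap.snd ℂ ℂ ℂ) (0, 0) :=
    hasFDerivAt_snd
  have hg := ((h1.const_sub 1).const_mul (Real.pi * Complex.I / 2)).add
    (((h1.pow 2).const_sub 1).mul h2)
  have ht := hg.cexp
  have hF : HasFDerivAt dominatingMap _ (0, 0) := (ht.pow 2).prodMk ((ht.pow 3).mul h1)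
  rw [hF.fderiv]
  intro h0
  obtain ⟨v, hv, hv0⟩ := (Submodule.ne_bot_iff _).mp (LinearMap.bot_lt_ker_of_det_eq_zero h0).ne'
  obtain ⟨a, b⟩ := v
  apply hv0
  have hv' := LinearMap.mem_ker.mp hv
  simp [Complex.exp_ne_zero] at hv'
  obtain ⟨hb, ha⟩ := hv'
  subst ha
  simpa using hb

end RamanujamDominating

/-- ℂ²-realization of Proposition 4.9 (kob.p2): there is a holomorphic map `F : ℂ² → ℂ²`
avoiding the cuspidal cubic except at `(1, 1)`, with dense image and with Jacobian
determinant not identically zero (holomorphic dominability by `ℂ²`). -/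
theorem stmt_10 :
    ∃ F : ℂ × ℂ → ℂ × ℂ, Differentiable ℂ F ∧
      (∀ p : ℂ × ℂ, F p ∈ cuspidalCubicᶜ ∪ {((1 : ℂ), (1 : ℂ))}) ∧
      Dense (Set.range F) ∧
      ∃ p : ℂ × ℂ, (fderiv ℂ F p).det ≠ 0 :=
  ⟨RamanujamDominating.dominatingMap, RamanujamDominating.differentiable_dominatingMap,
    RamanujamDominating.dominatingMap_mem, RamanujamDominating.dense_range_dominatingMap,
    (0, 0), RamanujamDominating.det_fderiv_dominatingMap_ne_zero⟩
end
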